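/- arXiv:2005.14125 — 4 statements merged into one kernel-verified Lean document; each statement's English description precedes it below -/
import Mathlib

section
/- Let a^1, a^2 be nonzero vectors in ℝ^d and let X be a compact subset of ℝ^d all of whose orbits are closed (as subsets of X). Then the set R(a^1, a^2; X) = {g_1(a^1·x) + g_2(a^2·x) : g_1, g_2 ∈ C(ℝ)} is dense in C(X) with respect to the uniform norm if and only if X contains no closed path with respect to the directions a^1 and a^2. -/
/-- A finite path `(p₀,...,p_{n-1})` (with `n` points) in `Q` with respect to
the directions `a1`, `a2`. -/
def FinPath {d : ℕ} (a1 a2 : Fin d → ℝ) (Q : Set (Fin d → ℝ)) (n : ℕ)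
    (p : ℕ → Fin d → ℝ) : Prop :=
  (∀ i < n, p i ∈ Q) ∧ (∀ i, i + 1 < n → p i ≠ p (i + 1)) ∧
  (((∀ i, 2 * i + 1 < n → ∑ t, a1 t * p (2 * i) t = ∑ t, a1 t * p (2 * i + 1) t) ∧
    (∀ i, 2 * i + 2 < n → ∑ t, a2 t * p (2 * i + 1) t = ∑ t, a2 t * p (2 * i + 2) t)) ∨
   ((∀ i, 2 * i + 1 < n → ∑ t, a2 t * p (2 * i) t = ∑ t, a2 t * p (2 * i + 1) t) ∧
    (∀ i, 2 * i + 2 < n → ∑ t, a1 t * p (2 * i + 1) t = ∑ t, a1 t * p (2 * i + 2) t)))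

/-- An (ℕ-indexed) infinite path in `Q` with respect to the directions `a1`, `a2`. -/
def PathSeq {d : ℕ} (a1 a2 : Fin d → ℝ) (Q : Set (Fin d → ℝ))
    (p : ℕ → Fin d → ℝ) : Prop :=
  (∀ i, p i ∈ Q) ∧ (∀ i, p i ≠ p (i + 1)) ∧
  (((∀ i, ∑ t, a1 t * p (2 * i) t = ∑ t, a1 t * p (2 * i + 1) t) ∧
    (∀ i, ∑ t, a2 t * p (2 * i + 1) t = ∑ t, a2 t * p (2 * i + 2) t)) ∨
   ((∀ i, ∑ t, a2 t * p (2 * i) t = ∑ t, a2 t * p (2 * i + 1) t) ∧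
    (∀ i, ∑ t, a1 t * p (2 * i + 1) t = ∑ t, a1 t * p (2 * i + 2) t)))

/-- A closed path `(p₁,...,p_{2m})`, encoded as a `2m`-periodic path sequence. -/
def ClosedPathSeq {d : ℕ} (a1 a2 : Fin d → ℝ) (Q : Set (Fin d → ℝ))
    (p : ℕ → Fin d → ℝ) : Prop :=
  PathSeq a1 a2 Q p ∧ ∃ m : ℕ, 0 < m ∧ ∀ i, p (i + 2 * m) = p i

/-!
If there is a closed path, then in a shortest one no point occurs both at an even and at an odd
position. The alternating sum over its points is a continuous functional which vanishes on all
superpositions, but not on a continuous function that is `0` at the even and `1` at the odd points.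

Conversely, by Hahn–Banach and Riesz representation, density follows once two finite measures `ρ`
and `σ` are equal whenever their images under both maps are equal. As the orbits are closed, the
least points of their preimages in the Cantor set give a Borel set `T` meeting each orbit exactly
once. Saturating `T` alternately with respect to the two maps splits the space into layers, and in
the absence of closed paths the map leading from the `n`-th layer to the next one is injective on
the `n`-th. Since `ρ` and `σ` agree on saturated sets, a subset `B` of the `n`-th layer has the same
discrepancy `|ρ B - σ B|` as its saturation without `B`, a subset of the next layer. The
discrepancy is thus bounded by the mass of every later layer, and these masses tend to `0`.
-/

namespace AlternatingPaths

open Set Relation MeasureTheory TopologicalSpace Function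

section Paths

variable {Y Z : Type*} {h : Bool → Y → Z} {b : Bool} {m n : ℕ} {x y z : Y} {p : ℕ → Y}

/-- An admissible step of a path in the direction `b`: distinct points with the same value of
`h b`. The two maps `h false` and `h true` play the role of `x ↦ a¹·x` and `x ↦ a²·x`. -/
def Step (h : Bool → Y → Z) (b : Bool) (x y : Y) : Prop := x ≠ y ∧ h b x = h b y

/-- An infinite path whose steps alternate between the two directions, starting with `b`.
The direction of the `i`-th step is encoded as `b ^^ i.bodd`. -/
def Alternating (h : Bool → Y → Z) (b : Bool) (p : ℕ → Y) : Prop :=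
  ∀ i, Step h (b ^^ i.bodd) (p i) (p (i + 1))

/-- `x` and `y` are the ends of a path with `n` steps whose first direction is `b`. -/
def Joined (h : Bool → Y → Z) (b : Bool) (n : ℕ) (x y : Y) : Prop :=
  ∃ p : ℕ → Y, p 0 = x ∧ p n = y ∧ ∀ i < n, Step h (b ^^ i.bodd) (p i) (p (i + 1))

/-- There is a closed path with `2 * m` points, encoded as a `2 * m`-periodic infinite path. -/
def HasClosedPath (h : Bool → Y → Z) (m : ℕ) : Prop :=
  ∃ b p, Alternating h b p ∧ Periodic p (2 * m)

/-- The absence of closed paths with respect to the two maps. -/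
def Acyclic (h : Bool → Y → Z) : Prop := ∀ m, 0 < m → ¬ HasClosedPath h m

theorem joined_zero (h : Bool → Y → Z) (b : Bool) (x : Y) : Joined h b 0 x x :=
  ⟨fun _ => x, rfl, rfl, by simp⟩

theorem Joined.cons (hxy : Step h b x y) (hyz : Joined h (!b) n y z) : Joined h b (n + 1) x z := by
  obtain ⟨p, rfl, rfl, hp⟩ := hyz
  refine ⟨fun i => i.casesOn x p, rfl, rfl, fun i hi => ?_⟩
  cases i with
  | zero => simpa using hxy
  | succ i => simpa using hp i (Nat.lt_of_succ_lt_succ hi)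

theorem Joined.snoc (hxy : Joined h b n x y) (hyz : Step h (b ^^ n.bodd) y z) :
    Joined h b (n + 1) x z := by
  obtain ⟨p, rfl, rfl, hp⟩ := hxy
  refine ⟨update p (n + 1) z, by simp, by simp, fun i hi => ?_⟩
  rw [update_of_ne hi.ne]
  rcases Nat.lt_succ_iff_lt_or_eq.1 hi with hin | rfl
  · rw [update_of_ne (Nat.succ_lt_succ hin).ne]
    exact hp i hin
  · rwa [update_self]

theorem Joined.exists_step_of_succ (hxz : Joined h b (n + 1) x z) :
    ∃ y, Joined h b n x y ∧ Step h (b ^^ n.bodd) y z := by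
  obtain ⟨p, rfl, rfl, hp⟩ := hxz
  exact ⟨p n, ⟨p, rfl, rfl, fun i hi => hp i (hi.trans n.lt_succ_self)⟩, hp n n.lt_succ_self⟩

theorem Alternating.joined (hp : Alternating h b p) (i n : ℕ) :
    Joined h (b ^^ i.bodd) n (p i) (p (i + n)) :=
  ⟨fun j => p (i + j), rfl, rfl, fun j _ => by
    simpa only [Nat.bodd_add, Bool.xor_assoc, add_assoc] using hp (i + j)⟩

theorem Joined.hasClosedPath (hxy : Joined h b (2 * m + 1) x y) (hyx : Step h (!b) y x) :
    HasClosedPath h (m + 1) := by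
  obtain ⟨p, rfl, rfl, hp⟩ := hxy
  refine ⟨b, fun i => p (i % (2 * (m + 1))), fun i => ?_, fun i => by simp⟩
  have hbodd : i.bodd = (i % (2 * (m + 1))).bodd := by
    conv_lhs => rw [← Nat.mod_add_div i (2 * (m + 1))]
    simp
  have hlt : i % (2 * (m + 1)) < 2 * (m + 1) := Nat.mod_lt _ (by lia)
  beta_reduce
  rw [hbodd, Nat.add_mod i 1, Nat.mod_eq_of_lt (show 1 < 2 * (m + 1) by lia)]
  generalize i % (2 * (m + 1)) = r at hlt ⊢
  obtain hr | rfl : r < 2 * m + 1 ∨ r = 2 * m + 1 := by lia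
  · rw [Nat.mod_eq_of_lt (show r + 1 < 2 * (m + 1) by lia)]
    exact hp r hr
  · rw [show 2 * m + 1 + 1 = 2 * (m + 1) by ring, Nat.mod_self]
    simpa using hyx

theorem Acyclic.not_joined (hac : Acyclic h) (hyx : Step h (!b) y x) :
    ¬ Joined h b (2 * m + 1) x y :=
  fun hxy => hac _ m.succ_pos (hxy.hasClosedPath hyx)

-- Cutting the first and the last of the `2 * k + 3` steps between two equal points of a path
-- leaves a shorter closed path.
theorem Alternating.ne_add_odd (hp : Alternating h b p)
    (hmin : ∀ k < m, 0 < k → ¬ HasClosedPath h k) (k : ℕ) (hk : 2 * k + 1 < 2 * m) (i : ℕ) :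
    p i ≠ p (i + (2 * k + 1)) := by
  induction k generalizing i with
  | zero => exact (hp i).1
  | succ k ih =>
    intro heq
    have hfirst : h (b ^^ i.bodd) (p i) = h (b ^^ i.bodd) (p (i + 1)) := (hp i).2
    have hlast : h (b ^^ i.bodd) (p (i + 1 + (2 * k + 1))) = h (b ^^ i.bodd) (p i) := by
      have := (hp (i + 1 + (2 * k + 1))).2
      rwa [show i + 1 + (2 * k + 1) + 1 = i + (2 * (k + 1) + 1) by ring, ← heq,
        show (i + 1 + (2 * k + 1)).bodd = i.bodd by simp] at this
    refine hmin (k + 1) (by lia) k.succ_pos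
      ((hp.joined (i + 1) (2 * k + 1)).hasClosedPath ⟨(ih (by lia) (i + 1)).symm, ?_⟩)
    simpa using hlast.trans hfirst

theorem Alternating.even_ne_odd (hp : Alternating h b p) (hper : Periodic p (2 * m)) (hm : 0 < m)
    (hmin : ∀ k < m, 0 < k → ¬ HasClosedPath h k) (i j : ℕ) : p (2 * i) ≠ p (2 * j + 1) := by
  rw [← hper.map_mod_nat (2 * i), ← hper.map_mod_nat (2 * j + 1)]
  have hi : 2 * i % (2 * m) = 2 * (i % m) := Nat.mul_mod_mul_left 2 i m
  have hj : (2 * j + 1) % (2 * m) = 2 * (j % m) + 1 := by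
    have := Nat.mul_mod_mul_left 2 j m
    have := Nat.mod_lt j hm
    rw [Nat.add_mod, Nat.mod_eq_of_lt (show 1 < 2 * m by lia), Nat.mod_eq_of_lt] <;> lia
  rw [hi, hj]
  have hir := Nat.mod_lt i hm
  have hjr := Nat.mod_lt j hm
  rcases le_or_gt (i % m) (j % m) with hij | hij
  · convert hp.ne_add_odd hmin (j % m - i % m) (by lia) (2 * (i % m)) using 2
    lia
  · convert (hp.ne_add_odd hmin (i % m - j % m - 1) (by lia) (2 * (j % m) + 1)).symm using 2
    lia

theorem exists_closedPath_even_ne_odd (hac : ¬ Acyclic h) :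
    ∃ m b p, 0 < m ∧ Alternating h b p ∧ Periodic p (2 * m) ∧ ∀ i j, p (2 * i) ≠ p (2 * j + 1) := by
  classical
  have hex : ∃ m, 0 < m ∧ HasClosedPath h m := by simpa [Acyclic] using hac
  obtain ⟨hm, b, p, hp, hper⟩ := Nat.find_spec hex
  exact ⟨Nat.find hex, b, p, hm, hp, hper,
    hp.even_ne_odd hper hm fun k hk hk0 hcl => Nat.find_min hex hk ⟨hk0, hcl⟩⟩

theorem Alternating.sum_sub_comp_eq_zero {G : Type*} [AddCommGroup G] (hp : Alternating h b p)
    (hper : Periodic p (2 * m)) (c : Bool) (g : Z → G) :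
    ∑ i ∈ Finset.range m, (g (h c (p (2 * i))) - g (h c (p (2 * i + 1)))) = 0 := by
  by_cases hc : c = b
  · subst hc
    refine Finset.sum_eq_zero fun i _ => ?_
    have hstep : h c (p (2 * i)) = h c (p (2 * i + 1)) := by simpa using (hp (2 * i)).2
    rw [hstep, sub_self]
  · obtain rfl : c = !b := Bool.eq_not.2 hc
    have hstep (i : ℕ) : h (!b) (p (2 * i + 1)) = h (!b) (p (2 * (i + 1))) := by
      simpa [mul_add] using (hp (2 * i + 1)).2
    have hclosed : p (2 * m) = p 0 := by simpa using hper 0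
    simp only [hstep]
    rw [Finset.sum_range_sub' fun i => g (h (!b) (p (2 * i))), hclosed, mul_zero, sub_self]

end Paths

section Orbits

variable {Y Z : Type*} {h : Bool → Y → Z} {x y : Y}

/-- The relation generating the orbits: two points are linked when one of the two maps takes the
same value at both. -/
def Linked (h : Bool → Y → Z) (x y : Y) : Prop := ∃ b, h b x = h b y

/-- The equivalence relation whose classes are the orbits, encoded without paths as the reflexive
transitive closure of `Linked h`. -/
def orbitRel (h : Bool → Y → Z) : Setoid Y where
  r := ReflTransGen (Linked h)
  iseqv := by
    have : Std.Symm (Linked h) := ⟨fun _ _ ⟨b, hb⟩ => ⟨b, hb.symm⟩⟩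
    exact ⟨fun _ => .refl, symm, .trans⟩

theorem orbitRel_of_eq (b : Bool) (hxy : h b x = h b y) : orbitRel h x y := .single ⟨b, hxy⟩

-- Two consecutive steps in the same direction are merged into one, or cancel.
theorem exists_joined_of_orbitRel (hxy : orbitRel h x y) : ∃ b n, Joined h b n x y := by
  induction hxy with
  | refl => exact ⟨false, 0, joined_zero h false x⟩
  | @tail y z _ hyz ih =>
    obtain ⟨b, n, hxy⟩ := ih
    obtain ⟨c, hc⟩ := hyz
    by_cases hne : y = z
    · exact ⟨b, n, hne ▸ hxy⟩
    by_cases hcb : c = (b ^^ n.bodd)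
    · exact ⟨b, n + 1, hxy.snoc ⟨hne, hcb ▸ hc⟩⟩
    cases n with
    | zero =>
      obtain ⟨p, rfl, rfl, -⟩ := hxy
      exact ⟨c, 1, .cons ⟨hne, hc⟩ (joined_zero h _ z)⟩
    | succ n =>
      obtain rfl : c = (b ^^ n.bodd) := by
        simpa using Bool.eq_not.2 hcb
      obtain ⟨w, hxw, hwy⟩ := hxy.exists_step_of_succ
      by_cases hwz : w = z
      · exact ⟨b, n, hwz ▸ hxw⟩
      · exact ⟨b, n + 1, hxw.snoc ⟨hwz, hwy.2.trans hc⟩⟩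

end Orbits

section Layers

variable {Y Z : Type*} {h : Bool → Y → Z} {T : Set Y} {n : ℕ} {x y : Y}

/-- The smallest union of fibers of `g` containing `s`, used to move from one layer to the next. -/
def saturation {W : Type*} (g : Y → W) (s : Set Y) : Set Y := g ⁻¹' (g '' s)

/-- The points reached from `T` by `n + 1` saturations with respect to `h false` and `h true`
alternately, starting with `h false`. -/
def level (h : Bool → Y → Z) (T : Set Y) : ℕ → Set Y
  | 0 => saturation (h false) T
  | n + 1 => saturation (h (n + 1).bodd) (level h T n)

/-- The points reached from `T` by `n + 1` but not by fewer alternating saturations. -/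
def layer (h : Bool → Y → Z) (T : Set Y) : ℕ → Set Y := disjointed (level h T)

theorem mem_level_of_eq (hx : x ∈ level h T n) (hxy : h n.bodd x = h n.bodd y) :
    y ∈ level h T n := by
  cases n <;> simp only [level, saturation, mem_preimage] at hx ⊢ <;> exact hxy ▸ hx

theorem monotone_level : Monotone (level h T) :=
  monotone_nat_of_le_succ fun _ x hx => ⟨x, hx, rfl⟩

theorem iUnion_level : ⋃ n, level h T n = saturation (Quotient.mk (orbitRel h)) T := by
  have orbitRel_of_mem (n : ℕ) : ∀ x ∈ level h T n, ∃ t ∈ T, orbitRel h t x := by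
    induction n with
    | zero => exact fun x ⟨t, ht, htx⟩ => ⟨t, ht, orbitRel_of_eq false htx⟩
    | succ n ih =>
      rintro x ⟨y, hy, hyx⟩
      obtain ⟨t, ht, hty⟩ := ih y hy
      exact ⟨t, ht, hty.tail ⟨_, hyx⟩⟩
  have mem_of_orbitRel {t x : Y} (ht : t ∈ T) (htx : orbitRel h t x) : ∃ n, x ∈ level h T n := by
    induction htx with
    | refl => exact ⟨0, t, ht, rfl⟩
    | @tail y z _ hyz ih =>
      obtain ⟨n, hn⟩ := ih
      obtain ⟨b, hb⟩ := hyz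
      by_cases hbn : b = n.bodd
      · exact ⟨n, mem_level_of_eq hn (hbn ▸ hb)⟩
      · obtain rfl : b = (n + 1).bodd := by simpa using Bool.eq_not.2 hbn
        exact ⟨n + 1, y, hn, hb⟩
  ext x
  rw [mem_iUnion]
  exact ⟨fun ⟨n, hn⟩ => (orbitRel_of_mem n x hn).imp fun t ht => ⟨ht.1, Quotient.sound ht.2⟩,
    fun ⟨t, ht, htx⟩ => mem_of_orbitRel ht (Quotient.exact htx)⟩

theorem iUnion_layer (hT : SurjOn (Quotient.mk (orbitRel h)) T univ) : ⋃ n, layer h T n = univ :=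
  iUnion_disjointed.trans (iUnion_level.trans (eq_univ_of_forall fun _ => hT (mem_univ _)))

theorem mem_layer_zero : x ∈ layer h T 0 ↔ x ∈ level h T 0 := by
  rw [layer, disjointed_zero]

theorem mem_layer_succ : x ∈ layer h T (n + 1) ↔ x ∈ level h T (n + 1) ∧ x ∉ level h T n := by
  rw [layer, monotone_level.disjointed_add_one, mem_sdiff]

theorem mem_layer_succ_of_eq (hx : x ∈ layer h T n) (hy : y ∉ layer h T n)
    (hxy : h (n + 1).bodd x = h (n + 1).bodd y) : y ∈ layer h T (n + 1) := by
  refine mem_layer_succ.2 ⟨⟨x, disjointed_subset _ _ hx, hxy⟩, fun hyn => ?_⟩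
  cases n with
  | zero => exact hy (mem_layer_zero.2 hyn)
  | succ n =>
    rw [mem_layer_succ] at hx hy
    have hyn' : y ∈ level h T n := not_not.1 fun hyn' => hy ⟨hyn, hyn'⟩
    exact hx.2 (mem_level_of_eq hyn' (by simpa using hxy.symm))

theorem exists_step_of_mem_layer_succ (hy : y ∈ layer h T (n + 1)) :
    ∃ x ∈ layer h T n, Step h (n + 1).bodd x y := by
  obtain ⟨⟨x, hx, hxy⟩, hyn⟩ := mem_layer_succ.1 hy
  refine ⟨x, ?_, fun heq => hyn (heq ▸ hx), hxy⟩
  cases n with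
  | zero => exact mem_layer_zero.2 hx
  | succ n =>
    exact mem_layer_succ.2 ⟨hx, fun hxn =>
      hyn (monotone_level n.le_succ (mem_level_of_eq hxn (by simpa using hxy)))⟩

theorem layer_succ :
    layer h T (n + 1) = saturation (h (n + 1).bodd) (layer h T n) \ layer h T n := by
  ext y
  refine ⟨fun hy => ?_, fun ⟨⟨x, hx, hxy⟩, hy⟩ => mem_layer_succ_of_eq hx hy hxy⟩
  obtain ⟨x, hx, -, hxy⟩ := exists_step_of_mem_layer_succ hy
  exact ⟨⟨x, hx, hxy⟩, disjoint_left.1 (disjoint_disjointed (level h T) n.succ_ne_self) hy⟩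

-- Follow both points down to layer `0`, where they meet or lie in one fiber of `h false`.
theorem exists_joined_of_mem_layer (hT : InjOn (Quotient.mk (orbitRel h)) T)
    (hx : x ∈ layer h T n) (hy : y ∈ layer h T n) (hne : x ≠ y) (hxy : orbitRel h x y) :
    ∃ m, Joined h n.bodd (2 * m + 1) x y := by
  induction n generalizing x y with
  | zero =>
    obtain ⟨t, ht, htx⟩ := mem_layer_zero.1 hx
    obtain ⟨u, hu, huy⟩ := mem_layer_zero.1 hy
    obtain rfl : t = u := hT ht hu <| Quotient.sound <|
      ((orbitRel_of_eq false htx).trans hxy).trans (orbitRel_of_eq false huy.symm)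
    exact ⟨0, .cons ⟨hne, htx.symm.trans huy⟩ (joined_zero h _ y)⟩
  | succ n ih =>
    obtain ⟨x', hx', hxx⟩ := exists_step_of_mem_layer_succ hx
    obtain ⟨y', hy', hyy⟩ := exists_step_of_mem_layer_succ hy
    by_cases heq : x' = y'
    · subst heq
      exact ⟨0, .cons ⟨hne, hxx.2.symm.trans hyy.2⟩ (joined_zero h _ y)⟩
    · obtain ⟨m, hm⟩ := ih hx' hy' heq
        (((orbitRel_of_eq _ hxx.2).trans hxy).trans (orbitRel_of_eq _ hyy.2.symm))
      refine ⟨m + 1, .snoc (y := y') (.cons (y := x') ⟨hxx.1.symm, hxx.2.symm⟩ ?_) ?_⟩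
      · simpa using hm
      · simpa using hyy

theorem Acyclic.injOn_layer (hac : Acyclic h) (hT : InjOn (Quotient.mk (orbitRel h)) T) (n : ℕ) :
    InjOn (h (n + 1).bodd) (layer h T n) := by
  intro x hx y hy hxy
  by_contra hne
  obtain ⟨m, hm⟩ := exists_joined_of_mem_layer hT hx hy hne (orbitRel_of_eq _ hxy)
  exact hac.not_joined ⟨Ne.symm hne, by simpa using hxy.symm⟩ hm

end Layers

section Measurability

theorem measurable_of_isLeast {α β : Type*} [MeasurableSpace α] [MeasurableSpace β]
    [TopologicalSpace β] [LinearOrder β] [OrderTopology β] [SecondCountableTopology β]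
    [BorelSpace β] {F : α → Set β} {m : α → β} (hm : ∀ x, IsLeast (F x) (m x))
    (hF : ∀ t, MeasurableSet {x | (F x ∩ Iic t).Nonempty}) : Measurable m := by
  refine measurable_of_Iic fun t => ?_
  convert hF t using 1
  ext x
  exact ⟨fun hx => ⟨m x, (hm x).1, hx⟩, fun ⟨k, hk, hkt⟩ => ((hm x).2 hk).trans hkt⟩

-- Parametrize `Y` by the Cantor set and select from each fiber the image of the least parameter.
theorem exists_measurable_fiber_selector {Y W : Type*} [TopologicalSpace Y] [CompactSpace Y]
    [MetrizableSpace Y] [MeasurableSpace Y] [BorelSpace Y] {q : Y → W}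
    (hq : ∀ x, IsClosed (q ⁻¹' {q x})) (hsat : ∀ K, IsCompact K → MeasurableSet (saturation q K)) :
    ∃ s : Y → Y, Measurable s ∧ (∀ x, q (s x) = q x) ∧ ∀ x y, q x = q y → s x = s y := by
  rcases isEmpty_or_nonempty Y with _ | _
  · exact ⟨id, measurable_id, fun _ => rfl, fun x => isEmptyElim x⟩
  let := metrizableSpaceMetric Y
  obtain ⟨φ, hφ, hφs⟩ := exists_nat_bool_continuous_surjective_of_compact Y
  let ψ : cantorSet → Y := φ ∘ cantorSetHomeomorphNatToBool
  have hψ : Continuous ψ := hφ.comp cantorSetHomeomorphNatToBool.continuous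
  have hψs : Surjective ψ := hφs.comp cantorSetHomeomorphNatToBool.surjective
  let F : Y → Set cantorSet := fun x => ψ ⁻¹' (q ⁻¹' {q x})
  have : CompactSpace cantorSet := isCompact_iff_compactSpace.1 isCompact_cantorSet
  have hleast (x : Y) : ∃ k, IsLeast (F x) k :=
    ((hq x).preimage hψ).isCompact.exists_isLeast ((hψs x).imp fun _ hk => congrArg q hk)
  choose m hm using hleast
  have hmeas : Measurable fun x => (m x : ℝ) := by
    refine measurable_of_isLeast (fun x => (Subtype.mono_coe _).map_isLeast (hm x)) fun t => ?_
    convert hsat (ψ '' (Subtype.val ⁻¹' Iic t))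
      ((isClosed_Iic.preimage continuous_subtype_val).isCompact.image hψ) using 1
    ext x
    constructor
    · rintro ⟨_, ⟨k, hk, rfl⟩, hkt⟩
      exact ⟨ψ k, ⟨k, hkt, rfl⟩, hk⟩
    · rintro ⟨_, ⟨k, hkt, rfl⟩, hk⟩
      exact ⟨k, ⟨k, hk, rfl⟩, hkt⟩
  refine ⟨ψ ∘ m, hψ.measurable.comp hmeas.subtype_mk, fun x => (hm x).1, fun x y hxy => ?_⟩
  have hF : F x = F y := by simp only [F, hxy]
  exact congrArg ψ ((hm x).unique (hF ▸ hm y))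

theorem exists_measurableSet_transversal {Y W : Type*} [TopologicalSpace Y] [CompactSpace Y]
    [MetrizableSpace Y] [MeasurableSpace Y] [BorelSpace Y] {q : Y → W}
    (hq : ∀ x, IsClosed (q ⁻¹' {q x})) (hsat : ∀ K, IsCompact K → MeasurableSet (saturation q K)) :
    ∃ T, MeasurableSet T ∧ BijOn q T (range q) := by
  obtain ⟨s, hs, hqs, hcongr⟩ := exists_measurable_fiber_selector hq hsat
  refine ⟨{x | s x = x}, measurableSet_eq_fun hs measurable_id, fun x _ => mem_range_self x,
    fun x hx y hy hxy => ?_, ?_⟩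
  · rw [← show s x = x from hx, ← show s y = y from hy, hcongr x y hxy]
  · rintro _ ⟨x, rfl⟩
    exact ⟨s x, hcongr _ _ (hqs x), hqs x⟩

theorem isCompact_saturation {Y Z : Type*} [TopologicalSpace Y] [CompactSpace Y]
    [TopologicalSpace Z] [T2Space Z] {g : Y → Z} (hg : Continuous g) {K : Set Y}
    (hK : IsCompact K) : IsCompact (saturation g K) :=
  ((hK.image hg).isClosed.preimage hg).isCompact

theorem measurableSet_orbit_saturation {Y Z : Type*} [TopologicalSpace Y] [CompactSpace Y]
    [T2Space Y] [MeasurableSpace Y] [BorelSpace Y] [TopologicalSpace Z] [T2Space Z]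
    {h : Bool → Y → Z} (hc : ∀ b, Continuous (h b)) {K : Set Y} (hK : IsCompact K) :
    MeasurableSet (saturation (Quotient.mk (orbitRel h)) K) := by
  have hlevel (n : ℕ) : IsCompact (level h K n) := by
    induction n with
    | zero => exact isCompact_saturation (hc _) hK
    | succ n ih => exact isCompact_saturation (hc _) ih
  rw [← iUnion_level]
  exact .iUnion fun n => (hlevel n).measurableSet

theorem Acyclic.measurableSet_layer {Y Z : Type*} [TopologicalSpace Y] [PolishSpace Y]
    [MeasurableSpace Y] [BorelSpace Y] [TopologicalSpace Z] [T2Space Z] {h : Bool → Y → Z}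
    (hac : Acyclic h) (hc : ∀ b, Continuous (h b)) {T : Set Y} (hTm : MeasurableSet T)
    (hT : InjOn (Quotient.mk (orbitRel h)) T) (n : ℕ) : MeasurableSet (layer h T n) := by
  borelize Z
  induction n with
  | zero =>
    rw [layer, disjointed_zero]
    exact (hc false).measurable (hTm.image_of_continuousOn_injOn (hc false).continuousOn
      fun t ht u hu htu => hT ht hu (Quotient.sound (orbitRel_of_eq false htu)))
  | succ n ih =>
    rw [layer_succ]
    exact ((hc _).measurable (ih.image_of_continuousOn_injOn (hc _).continuousOn
      (hac.injOn_layer hT n))).diff ih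

end Measurability

section Measures

variable {Y Z : Type*} [MeasurableSpace Y] {ρ σ : Measure Y} [IsFiniteMeasure ρ]
  [IsFiniteMeasure σ]

theorem abs_measureReal_sub_saturation_diff [MeasurableSpace Z] {g : Y → Z} (hg : Measurable g)
    (hmap : ρ.map g = σ.map g) {B : Set Y} (hB : MeasurableSet B)
    (hgB : MeasurableSet (g '' B)) :
    |ρ.real (saturation g B \ B) - σ.real (saturation g B \ B)| = |ρ.real B - σ.real B| := by
  have hsub : B ⊆ saturation g B := subset_preimage_image g B
  have heq : ρ.real (saturation g B) = σ.real (saturation g B) := by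
    rw [saturation, ← map_measureReal_apply hg hgB, hmap, map_measureReal_apply hg hgB]
  rw [measureReal_sdiff hsub hB, measureReal_sdiff hsub hB, heq, sub_sub_sub_cancel_left,
    abs_sub_comm]

variable {A : ℕ → Set Y}

theorem abs_measureReal_sub_le_of_forall_exists_succ
    (hstep : ∀ n B, MeasurableSet B → B ⊆ A n → ∃ B', MeasurableSet B' ∧ B' ⊆ A (n + 1) ∧
      |ρ.real B - σ.real B| ≤ |ρ.real B' - σ.real B'|)
    (j : ℕ) {n : ℕ} {B : Set Y} (hB : MeasurableSet B) (hBA : B ⊆ A n) :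
    |ρ.real B - σ.real B| ≤ (ρ + σ).real (A (j + n)) := by
  induction j generalizing n B with
  | zero =>
    calc |ρ.real B - σ.real B| ≤ |ρ.real B| + |σ.real B| := abs_sub _ _
      _ = (ρ + σ).real B := by
        rw [abs_of_nonneg measureReal_nonneg, abs_of_nonneg measureReal_nonneg,
          measureReal_add_apply]
      _ ≤ (ρ + σ).real (A (0 + n)) := measureReal_mono (by rwa [zero_add])
  | succ j ih =>
    obtain ⟨B', hB', hBA', hle⟩ := hstep n B hB hBA
    rw [add_assoc, add_comm 1 n]
    exact hle.trans (ih hB' hBA')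

theorem measure_ext_of_forall_exists_succ (hA : ∀ n, MeasurableSet (A n))
    (hdisj : Pairwise (Disjoint on A)) (hcover : ⋃ n, A n = univ)
    (hstep : ∀ n B, MeasurableSet B → B ⊆ A n → ∃ B', MeasurableSet B' ∧ B' ⊆ A (n + 1) ∧
      |ρ.real B - σ.real B| ≤ |ρ.real B' - σ.real B'|) : ρ = σ := by
  refine Measure.ext_of_iUnion_eq_univ hcover fun n => Measure.ext fun B hB => ?_
  rw [Measure.restrict_apply hB, Measure.restrict_apply hB]
  have hlim : Filter.Tendsto (fun j => (ρ + σ).real (A (j + n))) Filter.atTop (nhds 0) :=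
    (summable_measure_toReal hA hdisj).tendsto_atTop_zero.comp (Filter.tendsto_add_atTop_nat n)
  have hle : |ρ.real (B ∩ A n) - σ.real (B ∩ A n)| ≤ 0 := ge_of_tendsto' hlim fun j =>
    abs_measureReal_sub_le_of_forall_exists_succ hstep j (hB.inter (hA n)) inter_subset_right
  exact (measureReal_eq_measureReal_iff).1 (sub_eq_zero.1 (abs_nonpos_iff.1 hle))

theorem Acyclic.measure_ext [TopologicalSpace Y] [CompactSpace Y] [MetrizableSpace Y]
    [BorelSpace Y] [TopologicalSpace Z] [T2Space Z] [MeasurableSpace Z] [BorelSpace Z]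
    {h : Bool → Y → Z} (hac : Acyclic h) (hc : ∀ b, Continuous (h b))
    (horb : ∀ x, IsClosed {y | orbitRel h x y}) (hmap : ∀ b, ρ.map (h b) = σ.map (h b)) :
    ρ = σ := by
  let := metrizableSpaceMetric Y
  have hcl (x : Y) : IsClosed (Quotient.mk (orbitRel h) ⁻¹' {Quotient.mk (orbitRel h) x}) := by
    convert horb x using 1
    ext y
    exact Quotient.eq.trans (orbitRel h).comm'
  obtain ⟨T, hTm, -, hT, hTs⟩ :=
    exists_measurableSet_transversal hcl fun K hK => measurableSet_orbit_saturation hc hK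
  rw [Quotient.mk_surjective.range_eq] at hTs
  refine measure_ext_of_forall_exists_succ (hac.measurableSet_layer hc hTm hT)
    (disjoint_disjointed _) (iUnion_layer hTs) fun n B hB hBA => ?_
  have hinj : InjOn (h (n + 1).bodd) (layer h T n) := hac.injOn_layer hT n
  have hI : MeasurableSet (h (n + 1).bodd '' B) :=
    hB.image_of_continuousOn_injOn (hc _).continuousOn (hinj.mono hBA)
  refine ⟨saturation (h (n + 1).bodd) B \ B, ((hc _).measurable hI).diff hB, ?_,
    (abs_measureReal_sub_saturation_diff (hc _).measurable (hmap _) hB hI).ge⟩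
  rintro y ⟨⟨x, hx, hxy⟩, hy⟩
  exact mem_layer_succ_of_eq (hBA hx)
    (fun hyA => hy (hinj (hBA hx) hyA hxy ▸ hx)) hxy

end Measures

section PositiveFunctionals

theorem posPart_smul {𝕜 E : Type*} [Field 𝕜] [LinearOrder 𝕜] [IsStrictOrderedRing 𝕜]
    [AddCommGroup E] [Lattice E] [Module 𝕜 E] [PosSMulMono 𝕜 E] {c : 𝕜} (hc : 0 < c) (u : E) :
    (c • u)⁺ = c • u⁺ :=
  calc (c • u)⁺ = c • u ⊔ c • 0 := by rw [smul_zero, posPart_def]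
    _ = c • u⁺ := ((OrderIso.smulRight hc).map_sup u 0).symm

theorem posPart_add_le {E : Type*} [AddCommGroup E] [Lattice E] [IsOrderedAddMonoid E] (u v : E) :
    (u + v)⁺ ≤ u⁺ + v⁺ :=
  sup_le (add_le_add (le_posPart u) (le_posPart v))
    (add_nonneg (posPart_nonneg u) (posPart_nonneg v))

variable {E : Type*} [NormedAddCommGroup E] [Lattice E] [IsOrderedAddMonoid E]

theorem norm_le_norm_posPart_add_norm_posPart_neg (u : E) : ‖u‖ ≤ ‖u⁺‖ + ‖(-u)⁺‖ := by
  simpa [posPart_neg] using norm_sub_le u⁺ u⁻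

variable [HasSolidNorm E]

theorem norm_posPart_add_le (u v : E) : ‖(u + v)⁺‖ ≤ ‖u⁺‖ + ‖v⁺‖ := by
  refine le_trans ?_ (norm_add_le _ _)
  refine norm_le_norm_of_abs_le_abs ?_
  rw [abs_of_nonneg (posPart_nonneg _), abs_of_nonneg
    (add_nonneg (posPart_nonneg u) (posPart_nonneg v))]
  exact posPart_add_le u v

variable [NormedSpace ℝ E] [PosSMulMono ℝ E]

-- Hahn–Banach on `E × E`: the functional `(u, -u) ↦ L u` is dominated by a sublinear functional
-- that vanishes at pairs of nonpositive vectors, which makes every dominated extension positive.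
theorem exists_nonneg_linearMap_sub (L : StrongDual ℝ E) :
    ∃ P Q : E →ₗ[ℝ] ℝ, (∀ u, 0 ≤ u → 0 ≤ P u) ∧ (∀ u, 0 ≤ u → 0 ≤ Q u) ∧
      ∀ u, L u = P u - Q u := by
  let N : E × E → ℝ := fun z => ‖L‖ * (‖z.1⁺‖ + ‖z.2⁺‖)
  let δ : E →ₗ[ℝ] E × E := LinearMap.id.prod (-LinearMap.id)
  let φ : (E × E) →ₗ.[ℝ] ℝ :=
    ⟨LinearMap.range δ, (L : E →ₗ[ℝ] ℝ) ∘ₗ LinearMap.fst ℝ E E ∘ₗ Submodule.subtype _⟩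
  have hN_smul (c : ℝ) (hc : 0 < c) (z : E × E) : N (c • z) = c * N z := by
    simp only [N, Prod.smul_fst, Prod.smul_snd, posPart_smul hc, norm_smul,
      Real.norm_of_nonneg hc.le]
    ring
  have hN_add (z w : E × E) : N (z + w) ≤ N z + N w := by
    simp only [N, ← mul_add, Prod.fst_add, Prod.snd_add]
    refine mul_le_mul_of_nonneg_left ?_ (norm_nonneg L)
    linarith [norm_posPart_add_le z.1 w.1, norm_posPart_add_le z.2 w.2]
  have hφN : ∀ z : φ.domain, φ z ≤ N z := by
    rintro ⟨_, u, rfl⟩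
    exact (le_abs_self _).trans <| (L.le_opNorm u).trans <| mul_le_mul_of_nonneg_left
      (norm_le_norm_posPart_add_norm_posPart_neg u) (norm_nonneg L)
  obtain ⟨Λ, hΛφ, hΛN⟩ := exists_extension_of_le_sublinear φ N hN_smul hN_add hφN
  have hΛ (u v : E) (hu : 0 ≤ u) (hv : 0 ≤ v) : 0 ≤ Λ (u, v) := by
    have hN : N (-(u, v)) = 0 := by
      simp [N, posPart_eq_zero.2 (neg_nonpos.2 hu), posPart_eq_zero.2 (neg_nonpos.2 hv)]
    have := hΛN (-(u, v))
    rw [hN, map_neg] at this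
    linarith
  refine ⟨Λ ∘ₗ .inl ℝ E E, Λ ∘ₗ .inr ℝ E E, fun u hu => hΛ u 0 hu le_rfl,
    fun u hu => hΛ 0 u le_rfl hu, fun u => ?_⟩
  calc L u = Λ (u, -u) := (hΛφ ⟨δ u, u, rfl⟩).symm
    _ = Λ (u, 0) - Λ (0, u) := by rw [← map_sub, Prod.mk_sub_mk, sub_zero, zero_sub]

end PositiveFunctionals

section Density

theorem exists_strongDual_of_notMem_closure {E : Type*} [AddCommGroup E] [Module ℝ E]
    [TopologicalSpace E] [IsTopologicalAddGroup E] [ContinuousSMul ℝ E] [LocallyConvexSpace ℝ E]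
    {V : Submodule ℝ E} {f : E} (hf : f ∉ closure (V : Set E)) :
    ∃ L : StrongDual ℝ E, (∀ v ∈ V, L v = 0) ∧ L f ≠ 0 := by
  obtain ⟨L, c, hL, hc⟩ :=
    geometric_hahn_banach_closed_point V.convex.closure isClosed_closure hf
  have hc0 : 0 < c := by simpa using hL 0 (subset_closure V.zero_mem)
  refine ⟨L, fun v hv => ?_, (hc0.trans hc).ne'⟩
  by_contra hne
  have := hL ((c / L v) • v) (subset_closure (V.smul_mem _ hv))
  rw [map_smul, smul_eq_mul, div_mul_cancel₀ _ hne] at this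
  exact lt_irrefl _ this

variable {Y : Type*} [TopologicalSpace Y] [CompactSpace Y]

theorem hasSolidNorm_continuousMap : HasSolidNorm C(Y, ℝ) where
  solid f g hfg := (ContinuousMap.norm_le f (norm_nonneg g)).2 fun x =>
    (show |f x| ≤ |g x| from hfg x).trans (g.norm_coe_le_norm x)

variable [T2Space Y] [MeasurableSpace Y] [BorelSpace Y]

theorem exists_measure_of_nonneg (Λ : C(Y, ℝ) →ₗ[ℝ] ℝ) (hΛ : ∀ u, 0 ≤ u → 0 ≤ Λ u) :
    ∃ ρ : Measure Y, IsFiniteMeasure ρ ∧ ∀ u : C(Y, ℝ), Λ u = ∫ x, u x ∂ρ := by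
  let ι : CompactlySupportedContinuousMap Y ℝ →ₗ[ℝ] C(Y, ℝ) :=
    { toFun := fun u => u.toContinuousMap
      map_add' := fun _ _ => rfl
      map_smul' := fun _ _ => rfl }
  let Λ' := PositiveLinearMap.mk₀ (Λ ∘ₗ ι) fun u hu => hΛ _ hu
  exact ⟨RealRMK.rieszMeasure Λ', inferInstance, fun u =>
    (RealRMK.integral_rieszMeasure Λ'
      (CompactlySupportedContinuousMap.continuousMapEquiv u)).symm⟩

theorem dense_of_measure_ext {V : Submodule ℝ C(Y, ℝ)}
    (hV : ∀ ρ σ : Measure Y, IsFiniteMeasure ρ → IsFiniteMeasure σ →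
      (∀ v ∈ V, ∫ x, v x ∂ρ = ∫ x, v x ∂σ) → ρ = σ) : Dense (V : Set C(Y, ℝ)) := by
  have : HasSolidNorm C(Y, ℝ) := hasSolidNorm_continuousMap
  intro f
  by_contra hf
  obtain ⟨L, hLV, hLf⟩ := exists_strongDual_of_notMem_closure hf
  obtain ⟨P, Q, hP, hQ, hPQ⟩ := exists_nonneg_linearMap_sub L
  obtain ⟨ρ, hρ, hPρ⟩ := exists_measure_of_nonneg P hP
  obtain ⟨σ, hσ, hQσ⟩ := exists_measure_of_nonneg Q hQ
  have hL (u : C(Y, ℝ)) : L u = ∫ x, u x ∂ρ - ∫ x, u x ∂σ := by rw [hPQ, hPρ, hQσ]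
  obtain rfl : ρ = σ := hV ρ σ hρ hσ fun v hv => sub_eq_zero.1 ((hL v).symm.trans (hLV v hv))
  exact hLf ((hL f).trans (sub_self _))

end Density

section Superpositions

variable {Y Z : Type*} [TopologicalSpace Y] [TopologicalSpace Z] {h : Bool → C(Y, Z)}

/-- The space of superpositions `g₁ ∘ h false + g₂ ∘ h true` with continuous `g₁`, `g₂`; it plays
the role of `R(a¹, a²; X)`. -/
def superpositions (h : Bool → C(Y, Z)) : Submodule ℝ C(Y, ℝ) :=
  LinearMap.range <| ∑ b, (ContinuousMap.compRightAlgHom ℝ ℝ (h b)).toLinearMap ∘ₗ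
    LinearMap.proj (φ := fun _ : Bool => C(Z, ℝ)) b

theorem mem_superpositions {f : C(Y, ℝ)} :
    f ∈ superpositions h ↔ ∃ g : Bool → C(Z, ℝ), ∑ b, (g b).comp (h b) = f := by
  simp [superpositions]

theorem comp_mem_superpositions (b : Bool) (g : C(Z, ℝ)) : g.comp (h b) ∈ superpositions h :=
  mem_superpositions.2 ⟨Pi.single b g, by cases b <;> simp [ContinuousMap.zero_comp]⟩

theorem Alternating.sum_sub_eq_zero_of_mem_superpositions {b : Bool} {p : ℕ → Y} {m : ℕ}
    (hp : Alternating (fun b => h b) b p) (hper : Periodic p (2 * m)) {f : C(Y, ℝ)}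
    (hf : f ∈ superpositions h) :
    ∑ i ∈ Finset.range m, (f (p (2 * i)) - f (p (2 * i + 1))) = 0 := by
  obtain ⟨g, rfl⟩ := mem_superpositions.1 hf
  have hsum (c : Bool) := hp.sum_sub_comp_eq_zero hper c (g c)
  simp only [ContinuousMap.coe_sum, Finset.sum_apply, ContinuousMap.comp_apply,
    ← Finset.sum_sub_distrib]
  rw [Finset.sum_comm]
  exact Finset.sum_eq_zero fun c _ => hsum c

theorem exists_continuousMap_even_odd [NormalSpace Y] [T1Space Y] {p : ℕ → Y} {k : ℕ}
    (hk : 0 < k) (hper : Periodic p k) (hne : ∀ i j, p (2 * i) ≠ p (2 * j + 1)) :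
    ∃ f : C(Y, ℝ), ∀ i, f (p (2 * i)) = 0 ∧ f (p (2 * i + 1)) = 1 := by
  have hfin : (range p).Finite := by
    refine ((Set.finite_Iio k).image p).subset ?_
    rintro _ ⟨i, rfl⟩
    exact ⟨i % k, Nat.mod_lt i hk, hper.map_mod_nat i⟩
  have hclosed (φ : ℕ → ℕ) : IsClosed (range (p ∘ φ)) :=
    (hfin.subset (range_comp_subset_range φ p)).isClosed
  obtain ⟨f, hf0, hf1, -⟩ := exists_continuous_zero_one_of_isClosed
    (hclosed fun i => 2 * i) (hclosed fun i => 2 * i + 1) <| by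
      rw [disjoint_left]
      rintro _ ⟨i, rfl⟩ ⟨j, hj⟩
      exact hne i j hj.symm
  exact ⟨f, fun i => ⟨hf0 ⟨i, rfl⟩, hf1 ⟨i, rfl⟩⟩⟩

theorem acyclic_of_dense_superpositions [NormalSpace Y] [T1Space Y]
    (hd : Dense (superpositions h : Set C(Y, ℝ))) : Acyclic fun b => h b := by
  by_contra hac
  obtain ⟨m, b, p, hm, hp, hper, hne⟩ := exists_closedPath_even_ne_odd hac
  have hsum (f : C(Y, ℝ)) : ∑ i ∈ Finset.range m, (f (p (2 * i)) - f (p (2 * i + 1))) = 0 := by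
    have hcont : Continuous fun f : C(Y, ℝ) =>
        ∑ i ∈ Finset.range m, (f (p (2 * i)) - f (p (2 * i + 1))) := by fun_prop
    exact hd.induction (fun f => hp.sum_sub_eq_zero_of_mem_superpositions hper)
      (isClosed_eq hcont continuous_const) f
  obtain ⟨f, hf⟩ := exists_continuousMap_even_odd (by lia) hper hne
  have := hsum f
  simp only [hf, zero_sub, Finset.sum_const, Finset.card_range, nsmul_eq_mul] at this
  exact hm.ne' (by simpa using this)

theorem Acyclic.dense_superpositions [CompactSpace Y] [MetrizableSpace Y] [MetrizableSpace Z]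
    (hac : Acyclic fun b => h b) (horb : ∀ x, IsClosed {y | orbitRel (fun b => h b) x y}) :
    Dense (superpositions h : Set C(Y, ℝ)) := by
  borelize Y Z
  refine dense_of_measure_ext fun ρ σ _ _ heq =>
    hac.measure_ext (fun b => (h b).continuous) horb fun b => ?_
  refine ext_of_forall_integral_eq_of_IsFiniteMeasure fun g => ?_
  have hg {μ : Measure Y} : ∫ z, g z ∂μ.map (h b) = ∫ x, g (h b x) ∂μ :=
    integral_map (h b).measurable.aemeasurable g.continuous.aestronglyMeasurable
  rw [hg, hg]
  exact heq _ (comp_mem_superpositions b g.toContinuousMap)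

end Superpositions

section Transfer

theorem dense_superpositions_iff {Y Z : Type*} [TopologicalSpace Y] [CompactSpace Y]
    [TopologicalSpace Z] {h : Bool → C(Y, Z)} : Dense (superpositions h : Set C(Y, ℝ)) ↔
      ∀ f : C(Y, ℝ), ∀ ε > 0, ∃ g : Bool → C(Z, ℝ),
        ∀ x, |f x - g false (h false x) - g true (h true x)| < ε := by
  refine forall_congr' fun f => Metric.mem_closure_iff.trans (forall₂_congr fun ε hε => ?_)
  simp only [SetLike.mem_coe, mem_superpositions, ↓existsAndEq, true_and,
    ContinuousMap.dist_lt_iff hε, Real.dist_eq, Fintype.sum_bool, ContinuousMap.add_apply,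
    ContinuousMap.comp_apply, sub_add_eq_sub_sub_swap]

theorem dense_superpositions_restrict_iff {W Z : Type*} [TopologicalSpace W] [TopologicalSpace Z]
    (h : Bool → C(W, Z)) (Q : Set W) [CompactSpace Q] :
    Dense (superpositions fun b => (h b).restrict Q : Set C(Q, ℝ)) ↔
      ∀ f : W → ℝ, ContinuousOn f Q → ∀ ε : ℝ, 0 < ε →
        ∃ g₁ g₂ : Z → ℝ, Continuous g₁ ∧ Continuous g₂ ∧
          ∀ x ∈ Q, |f x - g₁ (h false x) - g₂ (h true x)| < ε := by
  rw [dense_superpositions_iff]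
  constructor
  · intro hd f hf ε hε
    obtain ⟨g, hg⟩ := hd ⟨Q.domRestrict f, hf.domRestrict⟩ ε hε
    exact ⟨g false, g true, map_continuous _, map_continuous _, fun x hx => hg ⟨x, hx⟩⟩
  · intro hd f ε hε
    have hf : Q.domRestrict (extend Subtype.val f 0) = f :=
      funext fun x => Subtype.val_injective.extend_apply f 0 x
    obtain ⟨g₁, g₂, hg₁, hg₂, hg⟩ := hd (extend Subtype.val f 0)
      (continuousOn_iff_continuous_domRestrict.2 (by rw [hf]; exact f.continuous)) ε hε
    refine ⟨fun b => bif b then ⟨g₂, hg₂⟩ else ⟨g₁, hg₁⟩, fun x => ?_⟩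
    rw [← hf]
    exact hg x x.2

variable {d : ℕ} {a1 a2 : Fin d → ℝ} {Q : Set (Fin d → ℝ)} {p : ℕ → Fin d → ℝ}

/-- The linear forms `x ↦ a¹·x` and `x ↦ a²·x`, indexed by `false` and `true`, which turn paths
with respect to `a¹` and `a²` into alternating paths. -/
def dirForm (a1 a2 : Fin d → ℝ) (b : Bool) : C(Fin d → ℝ, ℝ) where
  toFun x := ∑ t, (bif b then a2 else a1) t * x t

theorem exists_forall_xor_bodd_iff {P : Bool → ℕ → Prop} :
    (∃ b, ∀ i : ℕ, P (b ^^ i.bodd) i) ↔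
      ((∀ i, P false (2 * i)) ∧ ∀ i, P true (2 * i + 1)) ∨
        ((∀ i, P true (2 * i)) ∧ ∀ i, P false (2 * i + 1)) := by
  have split_parity (b : Bool) : (∀ i : ℕ, P (b ^^ i.bodd) i) ↔
      (∀ i, P b (2 * i)) ∧ ∀ i, P (!b) (2 * i + 1) := by
    refine ⟨fun hP => ⟨fun i => by simpa using hP (2 * i), fun i => by simpa using hP (2 * i + 1)⟩,
      fun ⟨heven, hodd⟩ i => ?_⟩
    obtain ⟨k, rfl | rfl⟩ := Nat.even_or_odd' i
    · simpa using heven k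
    · simpa using hodd k
  rw [Bool.exists_bool, split_parity, split_parity, Bool.not_false, Bool.not_true]

theorem pathSeq_iff : PathSeq a1 a2 Q p ↔
    (∀ i, p i ∈ Q) ∧ ∃ b, Alternating (fun b => dirForm a1 a2 b) b p := by
  simp only [Alternating, Step, forall_and, exists_and_left]
  rw [exists_forall_xor_bodd_iff
    (P := fun c i => dirForm a1 a2 c (p i) = dirForm a1 a2 c (p (i + 1)))]
  rfl

theorem finPath_iff {n : ℕ} : FinPath a1 a2 Q n p ↔
    (∀ i < n, p i ∈ Q) ∧ ∃ b, ∀ i, i + 1 < n →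
      Step (fun b => dirForm a1 a2 b) (b ^^ i.bodd) (p i) (p (i + 1)) := by
  simp only [Step, imp_and, forall_and, exists_and_left]
  rw [exists_forall_xor_bodd_iff
    (P := fun c i => i + 1 < n → dirForm a1 a2 c (p i) = dirForm a1 a2 c (p (i + 1)))]
  rfl

theorem acyclic_restrict_iff : Acyclic (fun b => (dirForm a1 a2 b).restrict Q) ↔
    ¬ ∃ p, ClosedPathSeq a1 a2 Q p := by
  constructor
  · rintro hac ⟨p, hp, m, hm, hper⟩
    obtain ⟨hpQ, b, hb⟩ := pathSeq_iff.1 hp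
    exact hac m hm ⟨b, fun i => ⟨p i, hpQ i⟩,
      fun i => ⟨fun heq => (hb i).1 (congrArg Subtype.val heq), (hb i).2⟩,
      fun i => Subtype.ext (hper i)⟩
  · rintro hno m hm ⟨b, p, hp, hper⟩
    exact hno ⟨fun i => p i,
      pathSeq_iff.2 ⟨fun i => (p i).2, b, fun i => ⟨Subtype.coe_ne_coe.2 (hp i).1, (hp i).2⟩⟩,
      m, hm, fun i => congrArg Subtype.val (hper i)⟩

theorem orbitRel_restrict_iff (x y : Q) :
    orbitRel (fun b => (dirForm a1 a2 b).restrict Q) x y ↔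
      ∃ (n : ℕ) (p : ℕ → Fin d → ℝ), FinPath a1 a2 Q n p ∧
        (∃ i < n, p i = x) ∧ ∃ j < n, p j = y := by
  constructor
  · intro hxy
    obtain ⟨b, n, p, rfl, rfl, hp⟩ := exists_joined_of_orbitRel hxy
    refine ⟨n + 1, fun i => p i, finPath_iff.2 ⟨fun i _ => (p i).2, b, fun i hi => ?_⟩,
      ⟨0, n.succ_pos, rfl⟩, n, n.lt_succ_self, rfl⟩
    have hstep := hp i (Nat.lt_of_succ_lt_succ hi)
    exact ⟨Subtype.coe_ne_coe.2 hstep.1, hstep.2⟩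
  · rintro ⟨n, p, hp, ⟨i, hi, hix⟩, j, hj, hjy⟩
    obtain ⟨hpQ, b, hb⟩ := finPath_iff.1 hp
    have hfirst (k : ℕ) (hk : k < n) : orbitRel (fun b => (dirForm a1 a2 b).restrict Q)
        ⟨p 0, hpQ 0 (Nat.zero_lt_of_lt hk)⟩ ⟨p k, hpQ k hk⟩ := by
      induction k with
      | zero => exact .refl
      | succ k ih => exact (ih (Nat.lt_of_succ_lt hk)).tail ⟨_, (hb k hk).2⟩
    obtain rfl : ⟨p i, hpQ i hi⟩ = x := Subtype.ext hix
    obtain rfl : ⟨p j, hpQ j hj⟩ = y := Subtype.ext hjy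
    exact ((orbitRel _).symm (hfirst i hi)).trans (hfirst j hj)

theorem isClosed_orbit_restrict {x : Q}
    (horb : IsClosed {y : Fin d → ℝ | ∃ (n : ℕ) (p : ℕ → Fin d → ℝ), FinPath a1 a2 Q n p ∧
      (∃ i < n, p i = x) ∧ ∃ j < n, p j = y}) :
    IsClosed {y | orbitRel (fun b => (dirForm a1 a2 b).restrict Q) x y} := by
  simp only [orbitRel_restrict_iff]
  exact horb.preimage continuous_subtype_val

end Transfer

end AlternatingPaths

open AlternatingPaths

theorem stmt5_general {Y Z : Type*} [TopologicalSpace Y] [CompactSpace Y]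
    [TopologicalSpace.MetrizableSpace Y] [TopologicalSpace Z] [TopologicalSpace.MetrizableSpace Z]
    (h : Bool → C(Y, Z)) (horb : ∀ x, IsClosed {y | orbitRel (fun b => h b) x y}) :
    Dense (superpositions h : Set C(Y, ℝ)) ↔ Acyclic fun b => h b :=
  ⟨acyclic_of_dense_superpositions, fun hac => hac.dense_superpositions horb⟩

/-- For a compact set `X ⊆ ℝᵈ` all of whose orbits are closed, the space
`R(a¹,a²; X) = {g₁(a¹·x) + g₂(a²·x) : g₁, g₂ ∈ C(ℝ)}` is dense in `C(X)` in the
uniform norm if and only if `X` contains no closed path with respect to the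
directions `a¹` and `a²`. -/
theorem stmt5 {d : ℕ} (a1 a2 : Fin d → ℝ) (ha1 : a1 ≠ 0) (ha2 : a2 ≠ 0)
    (X : Set (Fin d → ℝ)) (hX : IsCompact X)
    (horb : ∀ x ∈ X, IsClosed {y : Fin d → ℝ |
      ∃ (n : ℕ) (p : ℕ → Fin d → ℝ), FinPath a1 a2 X n p ∧
        (∃ i < n, p i = x) ∧ ∃ j < n, p j = y}) :
    (∀ f : (Fin d → ℝ) → ℝ, ContinuousOn f X → ∀ ε : ℝ, 0 < ε →
      ∃ g1 g2 : ℝ → ℝ, Continuous g1 ∧ Continuous g2 ∧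
        ∀ x ∈ X, |f x - g1 (∑ t, a1 t * x t) - g2 (∑ t, a2 t * x t)| < ε) ↔
    ¬ ∃ p : ℕ → Fin d → ℝ, ClosedPathSeq a1 a2 X p := by
  have : CompactSpace X := isCompact_iff_compactSpace.1 hX
  rw [← acyclic_restrict_iff, ← stmt5_general (fun b => (dirForm a1 a2 b).restrict X)
    fun x => isClosed_orbit_restrict (horb x x.2)]
  exact (dense_superpositions_restrict_iff (dirForm a1 a2) X).symm
end

section
/- Let a^1, a^2 be nonzero vectors in ℝ^d, let X be a compact subset of ℝ^d, and set H_1(X) = {g_1(a^1·x) : g_1 ∈ C(ℝ)} and H_2(X) = {g_2(a^2·x) : g_2 ∈ C(ℝ)}. Then H_1(X) + H_2(X) = C(X) holds if and only if X contains no closed path with respect to the directions a^1 and a^2 and there exists a positive integer n_0 such that the lengths of all paths in X are bounded by n_0. -/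
/-!
Join two points of `X` when they agree under `u` or under `v`; paths are the walks in this graph
that alternate between the two kinds of edges without pausing.

*Necessity.* If every continuous function splits as `F₁ + F₂`, the open mapping theorem bounds
`‖F₂‖` by `C * ‖f‖`. Along a path starting with a `u`-edge, the alternating sum of `f` telescopes to
a difference of two values of `F₂`. When `f` has norm at most `1` and takes the values `1` and `-1`
alternately along a path of `2 * m` points, that sum is `2 * m`, so `2 * m ≤ 2 * C`. Such an `f`
exists as soon as points at odd distance along the path are distinct; a shortest violation would
yield a closed path on which the same sum vanishes.

*Sufficiency.* If all paths have at most `N` points, repeatedly discarding the points that are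
alone in their fibre (of `u` and `v` in turn) exhausts `X`, so `f = g₁ ∘ u + g₂ ∘ v` for possibly
discontinuous `g₁`, `g₂` of size at most `N * ‖f‖`. The component of a point in the graph is reached
in boundedly many steps, each of which preserves compactness; the same holds for the graph of
`g₁ ∘ u` over the component, which is itself generated by such steps in `X × [-B, B]`. Hence the
solution is continuous on each component. The space of components is compact Hausdorff, and a
partition of unity there glues nearby solutions into an approximate solution on `X`. Iterating on
the error gives an exact one.
-/

open Set Function Filter Topology

universe w w'

section Path

variable {X : Type*} {α β : Type w} {u : X → α} {v : X → β} {n : ℕ} {p : ℕ → X}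

/-- The points `p 0, …, p (n - 1)` form an alternating path for the maps `u` and `v`: consecutive
points are distinct and agree alternately under `u` and under `v`, beginning with `u`. When `u` and
`v` are the projections along two directions, the paths of length `n` in `X` are the alternating
paths for `u, v` and those for `v, u`. The sequence `p` is unconstrained from `n` on. -/
structure AltPath (u : X → α) (v : X → β) (n : ℕ) (p : ℕ → X) : Prop where
  ne : ∀ i, i + 1 < n → p i ≠ p (i + 1)
  left_eq : ∀ i, 2 * i + 1 < n → u (p (2 * i)) = u (p (2 * i + 1))
  right_eq : ∀ i, 2 * i + 2 < n → v (p (2 * i + 1)) = v (p (2 * i + 2))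

theorem altPath_iff :
    AltPath u v n p ↔ (∀ i, i + 1 < n → p i ≠ p (i + 1)) ∧
      (∀ i, 2 * i + 1 < n → u (p (2 * i)) = u (p (2 * i + 1))) ∧
      ∀ i, 2 * i + 2 < n → v (p (2 * i + 1)) = v (p (2 * i + 2)) :=
  ⟨fun h => ⟨h.ne, h.left_eq, h.right_eq⟩, fun ⟨h, h_left, h_right⟩ => ⟨h, h_left, h_right⟩⟩

namespace AltPath

theorem mono {m : ℕ} (hp : AltPath u v n p) (hmn : m ≤ n) : AltPath u v m p where
  ne i hi := hp.ne i (by omega)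
  left_eq i hi := hp.left_eq i (by omega)
  right_eq i hi := hp.right_eq i (by omega)

theorem tail (hp : AltPath u v (n + 1) p) : AltPath v u n fun i => p (i + 1) where
  ne i hi := hp.ne (i + 1) (by omega)
  left_eq i hi := hp.right_eq i (by omega)
  right_eq i hi := hp.left_eq (i + 1) (by omega)

theorem cons {x : X} (hp : AltPath v u n p) (hne : x ≠ p 0) (hx : u x = u (p 0)) :
    AltPath u v (n + 1) (Stream'.cons x p) where
  ne
    | 0, _ => hne
    | i + 1, hi => hp.ne i (by omega)
  left_eq
    | 0, _ => hx
    | i + 1, hi => hp.right_eq i (by omega)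
  right_eq i hi := hp.left_eq i (by omega)

theorem of_le_one (u : X → α) (v : X → β) (hn : n ≤ 1) (p : ℕ → X) : AltPath u v n p where
  ne i hi := by omega
  left_eq i hi := by omega
  right_eq i hi := by omega

end AltPath

theorem exists_bounded_eq_add_of_altPath_notMem {f : X → ℝ} {M : ℝ}
    (hf : ∀ x, |f x| ≤ M) (hM : 0 ≤ M) (n : ℕ) {Y : Set X}
    (hY : ∀ p, AltPath u v (n + 1) p → ∃ i ≤ n, p i ∉ Y) :
    ∃ (g₁ : α → ℝ) (g₂ : β → ℝ), (∀ t, |g₁ t| ≤ n * M) ∧ (∀ t, |g₂ t| ≤ n * M) ∧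
      ∀ x ∈ Y, f x = g₁ (u x) + g₂ (v x) := by
  induction n generalizing α β u v Y with
  | zero =>
    refine ⟨0, 0, by simp, by simp, fun x hx => ?_⟩
    obtain ⟨i, -, hi⟩ := hY _ (.of_le_one u v le_rfl fun _ => x)
    exact absurd hx hi
  | succ n ih =>
    let Y' : Set X := {x ∈ Y | ∃ y ∈ Y, y ≠ x ∧ u y = u x}
    have hY' : ∀ p, AltPath v u (n + 1) p → ∃ i ≤ n, p i ∉ Y' := by
      intro p hp
      by_contra! hpY
      obtain ⟨-, y, hy, hne, huy⟩ := hpY 0 n.zero_le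
      obtain ⟨_ | i, hi, hiY⟩ := hY _ (hp.cons hne huy)
      · exact hiY hy
      · exact hiY (hpY i (by omega)).1
    obtain ⟨g₂, g₁, hg₂, -, h⟩ := ih hY'
    have hfac : FactorsThrough (fun x : Y => f x - g₂ (v x)) fun x : Y => u x := by
      intro x y hxy
      rcases eq_or_ne x y with rfl | hne
      · rfl
      have hne' : (x : X) ≠ y := Subtype.coe_ne_coe.2 hne
      have hx := h x ⟨x.2, y, y.2, hne'.symm, hxy.symm⟩
      have hy := h y ⟨y.2, x, x.2, hne', hxy⟩
      dsimp only at hxy ⊢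
      rw [hx, hy, hxy]
      ring
    have hM' : n * M + M = (n + 1 : ℕ) * M := by push_cast; ring
    refine ⟨extend (fun x : Y => u x) (fun x : Y => f x - g₂ (v x)) 0, g₂, fun t => ?_,
      fun t => (hg₂ t).trans (by linarith), fun x hx => ?_⟩
    · by_cases ht : ∃ x : Y, u x = t
      · obtain ⟨x, rfl⟩ := ht
        rw [hfac.extend_apply _ x]
        linarith [abs_sub (f x) (g₂ (v x)), hf x, hg₂ (v x)]
      · rw [extend_apply' _ _ _ ht, Pi.zero_apply, abs_zero]
        positivity
    · have := hfac.extend_apply 0 ⟨x, hx⟩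
      dsimp only at this
      rw [this]
      ring

end Path

section Saturate

variable {X : Type*} {α β : Type w}

/-- The set of points that agree with some point of `A` under `u` or under `v`. Iterating it on a
singleton exhausts the component of that point in the graph whose edges join points agreeing under
`u` or under `v`. -/
def saturate (u : X → α) (v : X → β) (A : Set X) : Set X :=
  u ⁻¹' (u '' A) ∪ v ⁻¹' (v '' A)

theorem saturate_comm (u : X → α) (v : X → β) : saturate u v = saturate v u :=
  funext fun _ => union_comm _ _

variable {u : X → α} {v : X → β} {A : Set X}

theorem subset_saturate : A ⊆ saturate u v A :=
  (subset_preimage_image u A).trans subset_union_left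

theorem exists_altPath_of_notMem_iterate_saturate {k : ℕ} {y : X}
    (hy : y ∉ (saturate u v)^[k] A) (huy : u y ∈ u '' (saturate u v)^[k] A) :
    ∃ p, p 0 = y ∧ AltPath u v (k + 2) p := by
  induction k generalizing α β u v y with
  | zero =>
    obtain ⟨z, hz, hzy⟩ := huy
    exact ⟨Stream'.cons y fun _ => z, rfl,
      (AltPath.of_le_one v u le_rfl _).cons (fun h => hy (h ▸ hz)) hzy.symm⟩
  | succ k ih =>
    obtain ⟨z, hz, hzy⟩ := huy
    have hne : y ≠ z := fun h => hy (h ▸ hz)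
    rw [iterate_succ_apply'] at hy hz
    have hzu : u z ∉ u '' (saturate u v)^[k] A := fun h => hy (.inl (mem_preimage.2 (hzy ▸ h)))
    have hzA : z ∉ (saturate u v)^[k] A := fun h => hzu (mem_image_of_mem u h)
    have hzv : v z ∈ v '' (saturate u v)^[k] A := hz.resolve_left hzu
    rw [saturate_comm] at hzA hzv
    obtain ⟨p, rfl, hp⟩ := ih hzA hzv
    exact ⟨Stream'.cons y p, rfl, hp.cons hne hzy.symm⟩

theorem saturate_iterate_saturate_eq {N : ℕ} (hN : ∀ p, ¬ AltPath u v (N + 1) p) :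
    saturate u v ((saturate u v)^[N] A) = (saturate u v)^[N] A := by
  refine subset_saturate.antisymm' fun y hy => ?_
  by_contra hyA
  rcases hy with hu | hv
  · obtain ⟨p, -, hp⟩ := exists_altPath_of_notMem_iterate_saturate hyA hu
    exact hN p (hp.mono (by omega))
  · rw [saturate_comm] at hyA hv
    obtain ⟨p, -, hp⟩ := exists_altPath_of_notMem_iterate_saturate hyA hv
    exact hN _ hp.tail

theorem iterate_saturate_subset (k : ℕ) :
    (saturate u v)^[k] A ⊆ {x | ∃ a ∈ A, (Setoid.ker u ⊔ Setoid.ker v) a x} := by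
  induction k with
  | zero => exact fun x hx => ⟨x, hx, Setoid.refl' _ x⟩
  | succ k ih =>
    rw [iterate_succ_apply']
    rintro x (⟨y, hy, hyx⟩ | ⟨y, hy, hyx⟩) <;> obtain ⟨a, ha, hay⟩ := ih hy
    · exact ⟨a, ha, Setoid.trans' _ hay (le_sup_left (a := Setoid.ker u) hyx)⟩
    · exact ⟨a, ha, Setoid.trans' _ hay (le_sup_right (b := Setoid.ker v) hyx)⟩

theorem iterate_saturate_eq {N : ℕ} (hN : ∀ p, ¬ AltPath u v (N + 1) p) :
    (saturate u v)^[N] A = {x | ∃ a ∈ A, (Setoid.ker u ⊔ Setoid.ker v) a x} := by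
  refine (iterate_saturate_subset N).antisymm ?_
  set S := (saturate u v)^[N] A
  have hsat : saturate u v S = S := saturate_iterate_saturate_eq hN
  have hle : Setoid.ker u ⊔ Setoid.ker v ≤ Setoid.ker (· ∈ S) := by
    refine sup_le (fun x y hxy => ?_) fun x y hxy => ?_
    · exact propext ⟨fun h => hsat ▸ .inl ⟨x, h, hxy⟩, fun h => hsat ▸ .inl ⟨y, h, hxy.symm⟩⟩
    · exact propext ⟨fun h => hsat ▸ .inr ⟨x, h, hxy⟩, fun h => hsat ▸ .inr ⟨y, h, hxy.symm⟩⟩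
  rintro x ⟨a, ha, hax⟩
  exact (hle hax).mp (id_le_iterate_of_id_le (fun _ => subset_saturate) N A ha)

end Saturate

section Closed

variable {X : Type*} {α β : Type w} [TopologicalSpace X] [CompactSpace X]
  [TopologicalSpace α] [T2Space α] [TopologicalSpace β] [T2Space β]

theorem isClosed_saturate {u : X → α} {v : X → β} (hu : Continuous u) (hv : Continuous v)
    {A : Set X} (hA : IsClosed A) : IsClosed (saturate u v A) :=
  ((hA.isCompact.image hu).isClosed.preimage hu).union
    ((hA.isCompact.image hv).isClosed.preimage hv)

theorem isClosed_iterate_saturate {u : X → α} {v : X → β} (hu : Continuous u) (hv : Continuous v)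
    {A : Set X} (hA : IsClosed A) (k : ℕ) : IsClosed ((saturate u v)^[k] A) := by
  induction k with
  | zero => exact hA
  | succ k ih => exact iterate_succ_apply' (saturate u v) k A ▸ isClosed_saturate hu hv ih

end Closed

section FiberConst

variable {X : Type*} {α : Type*} [TopologicalSpace X]

/-- The continuous functions on `X` that are constant on the fibres of `u`. For compact `X` and
continuous `u` into a normal Hausdorff space, these are the functions `g ∘ u` with `g` continuous,
so this is the space `H(X)` of the direction underlying `u`. -/
def fiberConst (u : X → α) : Submodule ℝ C(X, ℝ) where
  carrier := {F | FactorsThrough F u}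
  add_mem' hF hG _ _ hxy := congr_arg₂ (· + ·) (hF hxy) (hG hxy)
  zero_mem' _ _ _ := rfl
  smul_mem' c _ hF _ _ hxy := congr_arg (c * ·) (hF hxy)

theorem mem_fiberConst {u : X → α} {F : C(X, ℝ)} : F ∈ fiberConst u ↔ FactorsThrough F u :=
  Iff.rfl

theorem isClosed_fiberConst (u : X → α) : IsClosed (fiberConst u : Set C(X, ℝ)) := by
  have : (fiberConst u : Set C(X, ℝ)) = ⋂ (x) (y) (_ : u x = u y), {F | F x = F y} := by
    ext F
    simp only [SetLike.mem_coe, mem_fiberConst, FactorsThrough, mem_iInter, mem_ofPred_eq]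
  rw [this]
  exact isClosed_iInter fun x => isClosed_iInter fun y => isClosed_iInter fun _ =>
    isClosed_eq (continuous_eval_const x) (continuous_eval_const y)

theorem exists_comp_eq_of_mem_fiberConst [CompactSpace X] [TopologicalSpace α] [T2Space α]
    [NormalSpace α] {u : C(X, α)} {F : C(X, ℝ)} (hF : F ∈ fiberConst u) :
    ∃ g : C(α, ℝ), (∀ t, |g t| ≤ ‖F‖) ∧ g.comp u = F := by
  have hquot : IsQuotientMap (rangeFactorization u) :=
    (Continuous.isClosedMap (by fun_prop)).isQuotientMap (by fun_prop) rangeFactorization_surjective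
  let u' : C(X, range u) := ⟨rangeFactorization u, hquot.continuous⟩
  have hF' : FactorsThrough F u' := fun x y hxy => hF (congr_arg Subtype.val hxy)
  have hlift : ∀ x, hquot.lift F hF' (u' x) = F x := DFunLike.congr_fun (hquot.lift_comp F hF')
  obtain ⟨g, hg, hgF⟩ := ContinuousMap.exists_restrict_eq_forall_mem_of_closed
    (t := Icc (-‖F‖) ‖F‖) (hquot.lift F hF')
    (by
      rintro ⟨_, x, rfl⟩
      exact abs_le.1 ((congr_arg abs (hlift x)).trans_le (F.norm_coe_le_norm x)))
    ⟨0, by simp⟩ (isCompact_range u.continuous).isClosed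
  refine ⟨g, fun t => abs_le.2 (hg t), ContinuousMap.ext fun x => ?_⟩
  exact (DFunLike.congr_fun hgF (u' x)).trans (hlift x)

end FiberConst

section Graph

theorem semiconj_image_saturate {X Y : Type*} {α β : Type w} {α' β' : Type w'} {γ : X → Y}
    {u : X → α} {v : X → β} {u' : Y → α'} {v' : Y → β'}
    (hu : ∀ y a, u' (γ a) = u' y ↔ ∃ x, u a = u x ∧ γ x = y)
    (hv : ∀ y a, v' (γ a) = v' y ↔ ∃ x, v a = v x ∧ γ x = y) :
    Semiconj (image γ) (saturate u v) (saturate u' v') := by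
  intro A
  ext y
  simp only [saturate, mem_union, mem_preimage, mem_image, exists_exists_and_eq_and, hu, hv]
  grind

variable {X : Type*} {α β : Type w} [TopologicalSpace X] [CompactSpace X] [T2Space X]
  [TopologicalSpace α] [T2Space α] [TopologicalSpace β] [T2Space β] {u : C(X, α)} {v : C(X, β)}

theorem isClosed_image_prodMk_iterate_saturate {f : C(X, ℝ)} {g₁ : α → ℝ} {g₂ : β → ℝ} {B : ℝ}
    (hf : ∀ x, f x = g₁ (u x) + g₂ (v x)) (hB : ∀ t, g₁ t ∈ Icc (-B) B) (x₀ : X) (k : ℕ) :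
    IsClosed ((fun x => (x, (⟨g₁ (u x), hB _⟩ : Icc (-B) B))) '' (saturate u v)^[k] {x₀}) := by
  set γ : X → X × Icc (-B) B := fun x => (x, ⟨g₁ (u x), hB _⟩)
  let u' : X × Icc (-B) B → α × ℝ := fun z => (u z.1, z.2)
  let v' : X × Icc (-B) B → β × ℝ := fun z => (v z.1, f z.1 - z.2)
  have hγ : Semiconj (image γ) (saturate u v) (saturate u' v') := by
    refine semiconj_image_saturate (fun y a => ?_) fun y a => ?_
    · simp only [u', γ, Prod.ext_iff]
      grind
    · simp only [v', γ, Prod.ext_iff]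
      grind
  rw [(hγ.iterate_right k).eq, image_singleton]
  exact isClosed_iterate_saturate (by fun_prop) (by fun_prop) isClosed_singleton k

variable [NormalSpace α]

theorem exists_mem_fiberConst_eqOn_iterate_saturate {f : C(X, ℝ)} {g₁ : α → ℝ} {g₂ : β → ℝ} {B : ℝ}
    (hf : ∀ x, f x = g₁ (u x) + g₂ (v x)) (hB : ∀ t, |g₁ t| ≤ B) (x₀ : X) (k : ℕ) :
    ∃ F ∈ fiberConst u, ‖F‖ ≤ B ∧ EqOn F (g₁ ∘ u) ((saturate u v)^[k] {x₀}) := by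
  have hB₀ : 0 ≤ B := (abs_nonneg _).trans (hB (u x₀))
  have hZ := isClosed_image_prodMk_iterate_saturate hf (fun t => abs_le.1 (hB t)) x₀ k
  set Z := (fun x => (x, (⟨g₁ (u x), _⟩ : Icc (-B) B))) '' (saturate u v)^[k] {x₀}
  have : CompactSpace Z := isCompact_iff_compactSpace.1 hZ.isCompact
  let u' : C(Z, α) := ⟨fun z => u z.1.1, by fun_prop⟩
  let F' : C(Z, ℝ) := ⟨fun z => z.1.2, by fun_prop⟩
  have hF' : F' ∈ fiberConst u' := by
    rintro ⟨_, x, -, rfl⟩ ⟨_, y, -, rfl⟩ (hxy : u x = u y)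
    exact congr_arg g₁ hxy
  obtain ⟨g, hg, hgF⟩ := exists_comp_eq_of_mem_fiberConst hF'
  have hF'B : ‖F'‖ ≤ B := (ContinuousMap.norm_le _ hB₀).2 fun z => abs_le.2 z.1.2.2
  refine ⟨g.comp u, fun _ _ hxy => congr_arg g hxy,
    (ContinuousMap.norm_le _ hB₀).2 fun x => (hg _).trans hF'B, fun x hx => ?_⟩
  exact DFunLike.congr_fun hgF ⟨_, mem_image_of_mem _ hx⟩

end Graph

section Quotient

theorem t2Space_of_isClosedMap {X Y : Type*} [TopologicalSpace X] [T1Space X] [NormalSpace X]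
    [TopologicalSpace Y] {f : X → Y} (hf : IsClosedMap f) (hfc : Continuous f)
    (hsurj : Surjective f) : T2Space Y := by
  have hfib : ∀ y, IsClosed (f ⁻¹' {y}) := fun y => by
    obtain ⟨x, rfl⟩ := hsurj y
    rw [← image_singleton]
    exact (hf _ isClosed_singleton).preimage hfc
  refine t2Space_iff_disjoint_nhds.2 fun y z hyz => ?_
  obtain ⟨U, V, hU, hV, hyU, hzV, hUV⟩ :=
    normal_separation (hfib y) (hfib z) ((disjoint_singleton.2 hyz).preimage f)
  refine Filter.disjoint_iff.2
    ⟨_, hf.eventually_nhds_fiber y fun x hx => hU.mem_nhds (hyU hx),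
      _, hf.eventually_nhds_fiber z fun x hx => hV.mem_nhds (hzV hx), ?_⟩
  refine Set.disjoint_left.2 fun w hwU hwV => ?_
  obtain ⟨x, rfl⟩ := hsurj w
  exact Set.disjoint_left.1 hUV (hwU x rfl) (hwV x rfl)

theorem exists_continuousMap_forall_dist_lt {X Q E : Type*} [TopologicalSpace X]
    [TopologicalSpace Q] [T2Space Q] [ParacompactSpace Q] [NormedAddCommGroup E] [NormedSpace ℝ E]
    {π : X → Q} (hπ : IsClosedMap π) (T : E →ₗ[ℝ] C(X, ℝ)) (f : C(X, ℝ)) {B ε : ℝ} (hε : 0 < ε)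
    (h : ∀ q, ∃ e, ‖e‖ ≤ B ∧ ∀ x, π x = q → T e x = f x) :
    ∃ G : C(Q, E), ∀ q, ‖G q‖ ≤ B ∧ ∀ x, π x = q → dist (T (G q) x) (f x) < ε := by
  refine exists_continuous_forall_mem_convex_of_local_const
    (t := fun q => {e | ‖e‖ ≤ B ∧ ∀ x, π x = q → dist (T e x) (f x) < ε}) (fun q => ?_) fun q => ?_
  · intro e he e' he' a b ha hb hab
    refine ⟨?_, fun x hx => ?_⟩
    · simpa using convex_closedBall (0 : E) B (by simpa using he.1) (by simpa using he'.1) ha hb hab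
    · simpa using convex_ball (f x) ε (he.2 x hx) (he'.2 x hx) ha hb hab
  · obtain ⟨e, heB, he⟩ := h q
    refine ⟨e, (hπ.eventually_nhds_fiber q fun x hx => ?_).mono fun _ hq => ⟨heB, hq⟩⟩
    have : Tendsto (fun y => dist (T e y) (f y)) (𝓝 x) (𝓝 (dist (T e x) (f x))) :=
      Continuous.tendsto (by fun_prop) x
    exact this.eventually_lt_const (by rwa [he x hx, dist_self])

variable {X : Type*} [TopologicalSpace X] [CompactSpace X]

theorem exists_mem_fiberConst_forall_eq_eval {α Q : Type*} [TopologicalSpace Q] {u : X → α}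
    {π : X → Q} (hπ : Continuous π) (hfac : FactorsThrough π u) {G : Q → fiberConst u}
    (hG : Continuous G) {B : ℝ} (hB : 0 ≤ B) (hGB : ∀ q, ‖G q‖ ≤ B) :
    ∃ F ∈ fiberConst u, ‖F‖ ≤ B ∧ ∀ x, F x = (G (π x) : C(X, ℝ)) x := by
  refine ⟨⟨fun x => (G (π x) : C(X, ℝ)) x, by fun_prop⟩, fun x y hxy => ?_,
    (ContinuousMap.norm_le _ hB).2 fun x => ((G (π x)).1.norm_coe_le_norm x).trans (hGB _),
    fun x => rfl⟩
  exact (congr_arg (fun q => (G q : C(X, ℝ)) x) (hfac hxy)).trans ((G (π y)).2 hxy)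

variable {α β : Type w} [TopologicalSpace α] [T2Space α] [TopologicalSpace β]
  [T2Space β] {u : C(X, α)} {v : C(X, β)} {N : ℕ}

theorem isClosedMap_quotientMk_ker_sup_ker (hN : ∀ p, ¬ AltPath u v (N + 1) p) :
    IsClosedMap (Quotient.mk (Setoid.ker u ⊔ Setoid.ker v)) := by
  intro A hA
  rw [← isQuotientMap_quotient_mk'.isClosed_preimage]
  convert! isClosed_iterate_saturate u.continuous v.continuous hA N
  rw [iterate_saturate_eq hN]
  ext x
  exact exists_congr fun a => and_congr_right fun _ => Quotient.eq

variable [T2Space X] [NormalSpace α] [NormalSpace β]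

theorem exists_mem_fiberConst_add_eq_on_iterate_saturate (hN : ∀ p, ¬ AltPath u v (N + 1) p)
    (f : C(X, ℝ)) (x₀ : X) (k : ℕ) :
    ∃ F₁ ∈ fiberConst u, ∃ F₂ ∈ fiberConst v, ‖F₁‖ ≤ N * ‖f‖ ∧ ‖F₂‖ ≤ N * ‖f‖ ∧
      ∀ x ∈ (saturate u v)^[k] {x₀}, F₁ x + F₂ x = f x := by
  obtain ⟨g₁, g₂, hg₁, hg₂, hfg⟩ := exists_bounded_eq_add_of_altPath_notMem (Y := univ)
    f.norm_coe_le_norm (norm_nonneg f) N fun p hp => (hN p hp).elim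
  obtain ⟨F₁, hF₁, hF₁B, hF₁g⟩ := exists_mem_fiberConst_eqOn_iterate_saturate
    (fun x => hfg x (mem_univ x)) hg₁ x₀ k
  obtain ⟨F₂, hF₂, hF₂B, hF₂g⟩ := exists_mem_fiberConst_eqOn_iterate_saturate
    (fun x => (hfg x (mem_univ x)).trans (add_comm _ _)) hg₂ x₀ k
  rw [saturate_comm] at hF₂g
  refine ⟨F₁, hF₁, F₂, hF₂, hF₁B, hF₂B, fun x hx => ?_⟩
  rw [hF₁g hx, hF₂g hx, hfg x (mem_univ x), comp_apply, comp_apply]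

theorem exists_mem_fiberConst_norm_sub_le (hN : ∀ p, ¬ AltPath u v (N + 1) p) (f : C(X, ℝ))
    {ε : ℝ} (hε : 0 < ε) :
    ∃ F₁ ∈ fiberConst u, ∃ F₂ ∈ fiberConst v,
      ‖F₁‖ ≤ N * ‖f‖ ∧ ‖F₂‖ ≤ N * ‖f‖ ∧ ‖F₁ + F₂ - f‖ ≤ ε := by
  let s := Setoid.ker u ⊔ Setoid.ker v
  have hcl : IsClosedMap (Quotient.mk s) := isClosedMap_quotientMk_ker_sup_ker hN
  have : T2Space (Quotient s) := t2Space_of_isClosedMap hcl continuous_quotient_mk'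
    Quotient.mk_surjective
  let T := (fiberConst u).subtype.coprod (fiberConst v).subtype
  have hloc : ∀ q, ∃ e, ‖e‖ ≤ N * ‖f‖ ∧ ∀ x, Quotient.mk s x = q → T e x = f x := by
    refine Quotient.ind fun x₀ => ?_
    obtain ⟨F₁, hF₁, F₂, hF₂, hF₁B, hF₂B, hF⟩ :=
      exists_mem_fiberConst_add_eq_on_iterate_saturate hN f x₀ N
    refine ⟨(⟨F₁, hF₁⟩, ⟨F₂, hF₂⟩), max_le hF₁B hF₂B, fun x hx => hF x ?_⟩
    rw [iterate_saturate_eq hN]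
    exact ⟨x₀, rfl, Quotient.exact hx.symm⟩
  obtain ⟨G, hG⟩ :=
    exists_continuousMap_forall_dist_lt (E := fiberConst u × fiberConst v) hcl T f hε hloc
  have hB : 0 ≤ N * ‖f‖ := by positivity
  obtain ⟨F₁, hF₁, hF₁B, hF₁G⟩ := exists_mem_fiberConst_forall_eq_eval continuous_quotient_mk'
    (fun x y hxy => Quotient.sound (le_sup_left (a := Setoid.ker u) hxy)) G.continuous.fst hB
    fun q => (norm_fst_le _).trans (hG q).1
  obtain ⟨F₂, hF₂, hF₂B, hF₂G⟩ := exists_mem_fiberConst_forall_eq_eval continuous_quotient_mk'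
    (fun x y hxy => Quotient.sound (le_sup_right (b := Setoid.ker v) hxy)) G.continuous.snd hB
    fun q => (norm_snd_le _).trans (hG q).1
  refine ⟨F₁, hF₁, F₂, hF₂, hF₁B, hF₂B, (ContinuousMap.norm_le _ hε.le).2 fun x => ?_⟩
  rw [ContinuousMap.sub_apply, ContinuousMap.add_apply, hF₁G, hF₂G]
  exact ((hG (Quotient.mk s x)).2 x rfl).le

end Quotient

section Banach

theorem surjective_of_forall_exists_norm_sub_le {𝕜 E F : Type*} [NontriviallyNormedField 𝕜]
    [NormedAddCommGroup E] [NormedSpace 𝕜 E] [CompleteSpace E] [NormedAddCommGroup F]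
    [NormedSpace 𝕜 F] (T : E →L[𝕜] F) {C r : ℝ} (hr₀ : 0 ≤ r) (hr : r < 1)
    (h : ∀ y ≠ 0, ∃ x, ‖x‖ ≤ C * ‖y‖ ∧ ‖T x - y‖ ≤ r * ‖y‖) : Surjective T := by
  have h' : ∀ y, ∃ x, ‖x‖ ≤ C * ‖y‖ ∧ ‖T x - y‖ ≤ r * ‖y‖ := fun y =>
    (eq_or_ne y 0).elim (fun hy => ⟨0, by simp [hy]⟩) (h y)
  choose S hS hTS using h'
  intro y
  let e : ℕ → F := fun k => (fun z => z - T (S z))^[k] y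
  have he_succ : ∀ k, T (S (e k)) = e k - e (k + 1) := fun k => by
    simp only [e, iterate_succ_apply', sub_sub_cancel]
  have he : ∀ k, ‖e k‖ ≤ ‖y‖ * r ^ k := by
    intro k
    induction k with
    | zero => simp [e]
    | succ k ih =>
      have hk : e (k + 1) = e k - T (S (e k)) := by rw [he_succ, sub_sub_cancel]
      calc ‖e (k + 1)‖ ≤ r * ‖e k‖ := by rw [hk, norm_sub_rev]; exact hTS _
        _ ≤ r * (‖y‖ * r ^ k) := by gcongr
        _ = ‖y‖ * r ^ (k + 1) := by ring
  have he_lim : Tendsto e atTop (𝓝 0) := by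
    refine squeeze_zero_norm he ?_
    simpa using (tendsto_pow_atTop_nhds_zero_of_lt_one hr₀ hr).const_mul ‖y‖
  have hsum : Summable fun k => S (e k) := by
    refine .of_norm_bounded (g := fun k => |C| * ‖y‖ * r ^ k)
      ((summable_geometric_of_lt_one hr₀ hr).mul_left _) fun k => ?_
    calc ‖S (e k)‖ ≤ C * ‖e k‖ := hS _
      _ ≤ |C| * (‖y‖ * r ^ k) := by gcongr; exacts [le_abs_self C, he k]
      _ = |C| * ‖y‖ * r ^ k := by ring
  have hT : HasSum (fun k => e k - e (k + 1)) (T (∑' k, S (e k))) := by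
    simpa only [he_succ] using hsum.hasSum.mapL T
  refine ⟨_, tendsto_nhds_unique hT.tendsto_sum_nat ?_⟩
  simp only [Finset.sum_range_sub']
  simpa [e] using he_lim.const_sub (e 0)

theorem surjective_coprod_subtypeL_iff {R M : Type*} [Semiring R] [AddCommMonoid M]
    [TopologicalSpace M] [ContinuousAdd M] [Module R M] {P Q : Submodule R M} :
    Surjective (P.subtypeL.coprod Q.subtypeL) ↔ P ⊔ Q = ⊤ := by
  rw [Submodule.sup_eq_range, LinearMap.range_eq_top]
  rfl

end Banach

section Sufficiency

variable {X : Type*} {α β : Type w} [TopologicalSpace X] [CompactSpace X] [T2Space X]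
  [TopologicalSpace α] [T4Space α] [TopologicalSpace β] [T4Space β] {u : C(X, α)}
  {v : C(X, β)} {N : ℕ}

theorem fiberConst_sup_eq_top (hN : ∀ p, ¬ AltPath u v (N + 1) p) :
    fiberConst u ⊔ fiberConst v = ⊤ := by
  have : CompleteSpace (fiberConst u) := (isClosed_fiberConst u).completeSpace_coe
  have : CompleteSpace (fiberConst v) := (isClosed_fiberConst v).completeSpace_coe
  let T : fiberConst u × fiberConst v →L[ℝ] C(X, ℝ) :=
    (fiberConst u).subtypeL.coprod (fiberConst v).subtypeL
  suffices Surjective T from surjective_coprod_subtypeL_iff.1 this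
  refine surjective_of_forall_exists_norm_sub_le (𝕜 := ℝ) (E := fiberConst u × fiberConst v)
    (C := N) (r := 2⁻¹) T (by norm_num) (by norm_num) fun f hf => ?_
  obtain ⟨F₁, hF₁, F₂, hF₂, hF₁B, hF₂B, hF⟩ :=
    exists_mem_fiberConst_norm_sub_le hN f (half_pos (norm_pos_iff.2 hf))
  exact ⟨(⟨F₁, hF₁⟩, ⟨F₂, hF₂⟩), max_le hF₁B hF₂B, hF.trans_eq (by ring)⟩

end Sufficiency

section Necessity

theorem exists_norm_le_mul_of_sup_eq_top {𝕜 E : Type*} [NontriviallyNormedField 𝕜]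
    [NormedAddCommGroup E] [NormedSpace 𝕜 E] [CompleteSpace E] {P Q : Submodule 𝕜 E}
    [CompleteSpace P] [CompleteSpace Q] (h : P ⊔ Q = ⊤) :
    ∃ C > 0, ∀ x, ∃ a ∈ P, ∃ b ∈ Q, a + b = x ∧ ‖a‖ ≤ C * ‖x‖ ∧ ‖b‖ ≤ C * ‖x‖ := by
  let T : P × Q →L[𝕜] E := P.subtypeL.coprod Q.subtypeL
  obtain ⟨C, hC₀, hC⟩ := T.exists_preimage_norm_le (surjective_coprod_subtypeL_iff.2 h)
  refine ⟨C, hC₀, fun x => ?_⟩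
  obtain ⟨⟨a, b⟩, rfl, hab⟩ := hC x
  exact ⟨a, a.2, b, b.2, rfl, (norm_fst_le _).trans hab, (norm_snd_le _).trans hab⟩

theorem AltPath.sum_sub_eq {X M : Type*} {α β : Type w} [AddCommGroup M] {u : X → α} {v : X → β}
    {p : ℕ → X} {m : ℕ} {F₁ F₂ : X → M} (hp : AltPath u v (2 * m + 2) p)
    (hF₁ : FactorsThrough F₁ u) (hF₂ : FactorsThrough F₂ v) :
    ∑ i ∈ Finset.range (m + 1), ((F₁ + F₂) (p (2 * i)) - (F₁ + F₂) (p (2 * i + 1))) =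
      F₂ (p 0) - F₂ (p (2 * m + 1)) := by
  have h₁ : ∀ i ≤ m, F₁ (p (2 * i)) = F₁ (p (2 * i + 1)) :=
    fun i hi => hF₁ (hp.left_eq i (by omega))
  induction m with
  | zero => simp [show F₁ (p 0) = F₁ (p 1) from h₁ 0 le_rfl]
  | succ m ih =>
    have h₂ : F₂ (p (2 * m + 1)) = F₂ (p (2 * (m + 1))) := hF₂ (hp.right_eq m (by omega))
    rw [Finset.sum_range_succ, ih (hp.mono (by omega)) fun i hi => h₁ i (by omega), h₂]
    simp [h₁]

theorem exists_norm_le_one_eqOn_eqOn {X : Type*} [TopologicalSpace X] [CompactSpace X]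
    [NormalSpace X] {s t : Set X} (hs : IsClosed s) (ht : IsClosed t) (hst : Disjoint s t) :
    ∃ f : C(X, ℝ), ‖f‖ ≤ 1 ∧ EqOn f 1 s ∧ EqOn f (-1) t := by
  obtain ⟨f, hft, hfs, hf⟩ := exists_bounded_mem_Icc_of_closed_of_le ht hs hst.symm
    (by norm_num : (-1 : ℝ) ≤ 1)
  exact ⟨f, (ContinuousMap.norm_le _ zero_le_one).2 fun x => abs_le.2 (hf x), hfs, hft⟩

variable {X : Type*} {α β : Type w} [TopologicalSpace X] [CompactSpace X] [T2Space X]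
  {u : X → α} {v : X → β} {n m : ℕ} {p : ℕ → X}

theorem AltPath.exists_norm_le_one_forall_sub_eq (hp : AltPath u v (2 * m + 2) p)
    (hne : ∀ i j, 2 * i < 2 * m + 2 → 2 * j + 1 < 2 * m + 2 → p (2 * i) ≠ p (2 * j + 1)) :
    ∃ f : C(X, ℝ), ‖f‖ ≤ 1 ∧ ∀ F₁ ∈ fiberConst u, ∀ F₂ ∈ fiberConst v, F₁ + F₂ = f →
      F₂ (p 0) - F₂ (p (2 * m + 1)) = 2 * m + 2 := by
  let s : Set X := (fun i => p (2 * i)) '' Iic m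
  let t : Set X := (fun i => p (2 * i + 1)) '' Iic m
  have hst : Disjoint s t := by
    refine Set.disjoint_left.2 ?_
    rintro _ ⟨i, hi, rfl⟩ ⟨j, hj, hji⟩
    rw [mem_Iic] at hi hj
    exact hne i j (by omega) (by omega) hji.symm
  obtain ⟨f, hf, hfs, hft⟩ := exists_norm_le_one_eqOn_eqOn ((finite_Iic m).image _).isClosed
    ((finite_Iic m).image _).isClosed hst
  refine ⟨f, hf, fun F₁ hF₁ F₂ hF₂ hF => ?_⟩
  rw [← hp.sum_sub_eq hF₁ hF₂, ← ContinuousMap.coe_add, hF]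
  calc ∑ i ∈ Finset.range (m + 1), (f (p (2 * i)) - f (p (2 * i + 1)))
      = ∑ i ∈ Finset.range (m + 1), 2 := by
        refine Finset.sum_congr rfl fun i hi => ?_
        have hi' : i ∈ Iic m := Finset.mem_range_succ_iff.1 hi
        rw [hfs (mem_image_of_mem _ hi'), hft (mem_image_of_mem _ hi'), Pi.neg_apply,
          Pi.one_apply, Pi.one_apply]
        norm_num
    _ = 2 * m + 2 := by
        rw [Finset.sum_const, Finset.card_range, nsmul_eq_mul]
        push_cast
        ring

theorem AltPath.right_ne (h : fiberConst u ⊔ fiberConst v = ⊤) (hp : AltPath u v (2 * m + 2) p)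
    (hne : ∀ i j, 2 * i < 2 * m + 2 → 2 * j + 1 < 2 * m + 2 → p (2 * i) ≠ p (2 * j + 1)) :
    v (p 0) ≠ v (p (2 * m + 1)) := by
  intro hv
  obtain ⟨f, -, hf⟩ := hp.exists_norm_le_one_forall_sub_eq hne
  obtain ⟨F₁, hF₁, F₂, hF₂, hF⟩ := Submodule.mem_sup.1 (h ▸ Submodule.mem_top (x := f))
  have hzero : (0 : ℝ) = 2 * m + 2 := by rw [← hf F₁ hF₁ F₂ hF₂ hF, hF₂ hv, sub_self]
  exact absurd hzero.symm (by positivity)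

theorem AltPath.even_ne_odd (h : fiberConst u ⊔ fiberConst v = ⊤) (hp : AltPath u v n p)
    (i j : ℕ) (hi : 2 * i < n) (hj : 2 * j + 1 < n) : p (2 * i) ≠ p (2 * j + 1) := by
  induction n generalizing α β u v p i j with
  | zero => omega
  | succ n ih =>
    have htail := fun i j => ih (sup_comm (fiberConst v) (fiberConst u) ▸ h) hp.tail i j
    match i, j with
    | i + 1, j => exact (htail j i (by omega) (by omega)).symm
    | 0, 0 => exact hp.ne 0 (by omega)
    | 0, j + 1 =>
      have hu : u (p 1) ≠ u (p (2 * j + 2)) :=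
        (hp.tail.mono (by omega)).right_ne (sup_comm (fiberConst v) (fiberConst u) ▸ h)
          fun k l hk hl => htail k l (by omega) (by omega)
      intro heq
      exact hu ((hp.left_eq 0 (by omega)).symm.trans
        ((congr_arg u heq).trans (hp.left_eq (j + 1) hj).symm))

theorem exists_forall_altPath_le (h : fiberConst u ⊔ fiberConst v = ⊤) :
    ∃ N, ∀ n p, AltPath u v n p → n ≤ N := by
  have : CompleteSpace (fiberConst u) := (isClosed_fiberConst u).completeSpace_coe
  have : CompleteSpace (fiberConst v) := (isClosed_fiberConst v).completeSpace_coe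
  obtain ⟨C, hC₀, hC⟩ := exists_norm_le_mul_of_sup_eq_top h
  refine ⟨⌈2 * C⌉₊ + 1, fun n p hp => ?_⟩
  rcases lt_or_ge n 2 with hn | hn
  · omega
  obtain ⟨m, hm⟩ : ∃ m, n = 2 * m + 2 ∨ n = 2 * m + 3 := ⟨(n - 2) / 2, by omega⟩
  have hp' : AltPath u v (2 * m + 2) p := hp.mono (by omega)
  obtain ⟨f, hf, hfp⟩ := hp'.exists_norm_le_one_forall_sub_eq (hp'.even_ne_odd h)
  obtain ⟨F₁, hF₁, F₂, hF₂, hF, -, hF₂C⟩ := hC f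
  have hmC : ((2 * m + 2 : ℕ) : ℝ) ≤ 2 * C :=
    calc ((2 * m + 2 : ℕ) : ℝ) = F₂ (p 0) - F₂ (p (2 * m + 1)) := by
          push_cast
          exact (hfp F₁ hF₁ F₂ hF₂ hF).symm
      _ ≤ dist (F₂ (p 0)) (F₂ (p (2 * m + 1))) := le_abs_self _
      _ ≤ 2 * ‖F₂‖ := F₂.dist_le_two_norm _ _
      _ ≤ 2 * C := by
        gcongr
        exact hF₂C.trans (mul_le_of_le_one_right hC₀.le hf)
  have : 2 * m + 2 ≤ ⌈2 * C⌉₊ := Nat.cast_le.1 (hmC.trans (Nat.le_ceil _))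
  omega

end Necessity

section Splitting

variable {X : Type*} {α β : Type w} [TopologicalSpace X] [CompactSpace X]
  [TopologicalSpace α] [T4Space α] [TopologicalSpace β] [T4Space β]

theorem fiberConst_sup_eq_top_iff_forall_exists_comp {u : C(X, α)} {v : C(X, β)} :
    fiberConst u ⊔ fiberConst v = ⊤ ↔
      ∀ f : C(X, ℝ), ∃ (g₁ : C(α, ℝ)) (g₂ : C(β, ℝ)), f = g₁.comp u + g₂.comp v := by
  simp only [Submodule.eq_top_iff', Submodule.mem_sup]
  refine forall_congr' fun f => ⟨?_, ?_⟩
  · rintro ⟨F₁, hF₁, F₂, hF₂, rfl⟩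
    obtain ⟨g₁, -, rfl⟩ := exists_comp_eq_of_mem_fiberConst hF₁
    obtain ⟨g₂, -, rfl⟩ := exists_comp_eq_of_mem_fiberConst hF₂
    exact ⟨g₁, g₂, rfl⟩
  · rintro ⟨g₁, g₂, rfl⟩
    exact ⟨_, fun _ _ h => congr_arg g₁ h, _, fun _ _ h => congr_arg g₂ h, rfl⟩

theorem stmt6_general [T2Space X] (u : C(X, α)) (v : C(X, β)) :
    (∀ f : C(X, ℝ), ∃ (g₁ : C(α, ℝ)) (g₂ : C(β, ℝ)), f = g₁.comp u + g₂.comp v) ↔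
      ∃ N, ∀ n p, AltPath u v n p → n ≤ N := by
  rw [← fiberConst_sup_eq_top_iff_forall_exists_comp]
  exact ⟨exists_forall_altPath_le, fun ⟨N, hN⟩ => fiberConst_sup_eq_top fun p hp =>
    (hN (N + 1) p hp).not_gt N.lt_succ_self⟩

end Splitting

section Directions

theorem forall_continuousOn_exists_add_iff {E α β : Type*} [TopologicalSpace E]
    [TopologicalSpace α] [TopologicalSpace β] {X : Set E} (u : C(E, α)) (v : C(E, β)) :
    (∀ f : E → ℝ, ContinuousOn f X → ∃ (g₁ : α → ℝ) (g₂ : β → ℝ), Continuous g₁ ∧ Continuous g₂ ∧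
      ∀ x ∈ X, f x = g₁ (u x) + g₂ (v x)) ↔
    ∀ f : C(X, ℝ), ∃ (g₁ : C(α, ℝ)) (g₂ : C(β, ℝ)),
      f = g₁.comp (u.restrict X) + g₂.comp (v.restrict X) := by
  constructor
  · intro h f
    have hf : ∀ x : X, extend Subtype.val f 0 x = f x := Subtype.val_injective.extend_apply f 0
    have hfc : ContinuousOn (extend Subtype.val f 0) X :=
      continuousOn_iff_continuous_domRestrict.2 (f.continuous.congr fun x => (hf x).symm)
    obtain ⟨g₁, g₂, hg₁, hg₂, hg⟩ := h _ hfc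
    exact ⟨⟨g₁, hg₁⟩, ⟨g₂, hg₂⟩, ContinuousMap.ext fun x => (hf x).symm.trans (hg x x.2)⟩
  · intro h f hf
    obtain ⟨g₁, g₂, hg⟩ := h ⟨_, continuousOn_iff_continuous_domRestrict.1 hf⟩
    exact ⟨g₁, g₂, g₁.continuous, g₂.continuous, fun x hx => DFunLike.congr_fun hg ⟨x, hx⟩⟩

variable {d : ℕ} {a1 a2 : Fin d → ℝ} {X : Set (Fin d → ℝ)} {n : ℕ} {p : ℕ → Fin d → ℝ}

/-- The projection `x ↦ a · x` along the direction `a`, as a continuous map. -/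
def dotProductMap (a : Fin d → ℝ) : C(Fin d → ℝ, ℝ) :=
  ⟨fun x => a ⬝ᵥ x, by fun_prop⟩

theorem altPath_dotProductMap_iff {q : ℕ → X} (hq : ∀ i < n, (q i : Fin d → ℝ) = p i) :
    AltPath ((dotProductMap a1).restrict X) ((dotProductMap a2).restrict X) n q ↔
      (∀ i, i + 1 < n → p i ≠ p (i + 1)) ∧
        (∀ i, 2 * i + 1 < n → ∑ t, a1 t * p (2 * i) t = ∑ t, a1 t * p (2 * i + 1) t) ∧
        ∀ i, 2 * i + 2 < n → ∑ t, a2 t * p (2 * i + 1) t = ∑ t, a2 t * p (2 * i + 2) t := by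
  have hdot : ∀ a, ∀ i < n, (dotProductMap a).restrict X (q i) = ∑ t, a t * p i t :=
    fun a i hi => congr_arg (a ⬝ᵥ ·) (hq i hi)
  rw [altPath_iff]
  refine and_congr (forall₂_congr fun i hi => ?_)
    (and_congr (forall₂_congr fun i hi => ?_) (forall₂_congr fun i hi => ?_))
  · rw [← hq i (by omega), ← hq (i + 1) hi, Subtype.coe_ne_coe]
  · rw [hdot a1 _ (by omega), hdot a1 _ hi]
  · rw [hdot a2 _ (by omega), hdot a2 _ hi]

theorem finPath_iff {q : ℕ → X} (hq : ∀ i < n, (q i : Fin d → ℝ) = p i) :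
    FinPath a1 a2 X n p ↔
      AltPath ((dotProductMap a1).restrict X) ((dotProductMap a2).restrict X) n q ∨
        AltPath ((dotProductMap a2).restrict X) ((dotProductMap a1).restrict X) n q := by
  have hmem : ∀ i < n, p i ∈ X := fun i hi => hq i hi ▸ (q i).2
  rw [altPath_dotProductMap_iff hq, altPath_dotProductMap_iff hq, ← and_or_left]
  exact and_iff_right hmem

theorem PathSeq.finPath (hp : PathSeq a1 a2 X p) (n : ℕ) : FinPath a1 a2 X n p :=
  ⟨fun i _ => hp.1 i, fun i _ => hp.2.1 i, hp.2.2.imp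
    (fun h => ⟨fun i _ => h.1 i, fun i _ => h.2 i⟩) fun h => ⟨fun i _ => h.1 i, fun i _ => h.2 i⟩⟩

theorem forall_finPath_le_iff {N : ℕ} :
    (∀ n p, FinPath a1 a2 X n p → n ≤ N) ↔ ∀ n q,
      AltPath ((dotProductMap a1).restrict X) ((dotProductMap a2).restrict X) n q ∨
        AltPath ((dotProductMap a2).restrict X) ((dotProductMap a1).restrict X) n q → n ≤ N := by
  refine ⟨fun h n q hq => h n _ ((finPath_iff fun _ _ => rfl).2 hq), fun h n p hp => ?_⟩
  rcases n.eq_zero_or_pos with rfl | hn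
  · exact N.zero_le
  let q : ℕ → X := fun i => if hi : i < n then ⟨p i, hp.1 i hi⟩ else ⟨p 0, hp.1 0 hn⟩
  exact h n q ((finPath_iff fun i hi => by simp only [q, dif_pos hi]).1 hp)

theorem not_exists_closedPathSeq_and_exists_forall_finPath_le_iff :
    ((¬ ∃ p, ClosedPathSeq a1 a2 X p) ∧ ∃ n0, 0 < n0 ∧ ∀ n p, FinPath a1 a2 X n p → n ≤ n0) ↔
      ∃ N, ∀ n q,
        AltPath ((dotProductMap a1).restrict X) ((dotProductMap a2).restrict X) n q → n ≤ N := by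
  simp only [forall_finPath_le_iff]
  constructor
  · rintro ⟨-, N, -, hN⟩
    exact ⟨N, fun n q hq => hN n q (.inl hq)⟩
  · rintro ⟨N, hN⟩
    have hN' : ∀ n q,
        AltPath ((dotProductMap a1).restrict X) ((dotProductMap a2).restrict X) n q ∨
        AltPath ((dotProductMap a2).restrict X) ((dotProductMap a1).restrict X) n q →
          n ≤ N + 1 := by
      rintro (_ | n) q (hq | hq)
      · omega
      · omega
      · exact (hN _ q hq).trans N.le_succ
      · exact Nat.succ_le_succ (hN _ _ hq.tail)
    refine ⟨fun ⟨p, hp, _⟩ => ?_, N + 1, N.succ_pos, hN'⟩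
    exact ((forall_finPath_le_iff.2 hN') (N + 2) p (hp.finPath _)).not_gt (by omega)

end Directions

/-- For a compact set `X ⊆ ℝᵈ`, one has
`H₁(X) + H₂(X) = C(X)` (every continuous function on `X` is a sum
`g₁(a¹·x) + g₂(a²·x)` with `g₁, g₂ ∈ C(ℝ)`) if and only if `X` contains no
closed path and the lengths of all paths in `X` are bounded by some positive
integer `n₀`. -/
theorem stmt6 {d : ℕ} (a1 a2 : Fin d → ℝ) (ha1 : a1 ≠ 0) (ha2 : a2 ≠ 0)
    (X : Set (Fin d → ℝ)) (hX : IsCompact X) :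
    (∀ f : (Fin d → ℝ) → ℝ, ContinuousOn f X →
      ∃ g1 g2 : ℝ → ℝ, Continuous g1 ∧ Continuous g2 ∧
        ∀ x ∈ X, f x = g1 (∑ t, a1 t * x t) + g2 (∑ t, a2 t * x t)) ↔
    ((¬ ∃ p : ℕ → Fin d → ℝ, ClosedPathSeq a1 a2 X p) ∧
      ∃ n0 : ℕ, 0 < n0 ∧
        ∀ (n : ℕ) (p : ℕ → Fin d → ℝ), FinPath a1 a2 X n p → n ≤ n0) := by
  have : CompactSpace X := isCompact_iff_compactSpace.1 hX
  exact (forall_continuousOn_exists_add_iff (dotProductMap a1) (dotProductMap a2)).trans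
    ((stmt6_general _ _).trans not_exists_closedPathSeq_and_exists_forall_finPath_le_iff.symm)
end

section
/- Let a^1, ..., a^k be pairwise linearly independent vectors in ℝ^n and suppose a continuous function f ∈ C(ℝ^n) has the form f(x) = ∑_{i=1}^k f_i(a^i·x), where f_1, ..., f_k : ℝ → ℝ are arbitrarily behaved functions. Then there exist continuous functions g_1, ..., g_k : ℝ → ℝ and a polynomial P : ℝ^n → ℝ of total degree at most k − 1 such that f(x) = ∑_{i=1}^k g_i(a^i·x) + P(x) for all x ∈ ℝ^n. -/
/-!
A difference `Δ_[v]` kills the ridge term `F j (a j ⬝ᵥ x)` as soon as `v` is orthogonal to `a j`.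
If `a i ≠ 0`, one such step for each `j ≠ i`, chosen not orthogonal to `a i`, isolates `F i`: for
`k` directions, the mixed differences of `F i` of order `k - 1` are mixed differences of `f`, hence
jointly continuous in the steps and the base point, although `F i` may be nowhere continuous.

On `ℚ` the identity `∑ j < n, Δ_[m • e] u (x + j • e) = ∑ i < m, Δ_[n • e] u (x + i • e)` with
`n • e = 1` compares a small difference of `u` with differences of step `1` and with differences of
higher order. By induction on the order, `F i` is locally uniformly continuous on `ℚ`, so it agrees
there with a continuous function `g i`. The mixed differences of `F i - g i` of order `k - 1` are
continuous and vanish at rational steps and points, hence identically.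

Thus the continuous function `f - ∑ i, g i (a i ⬝ᵥ x)` is annihilated by all mixed differences of
order `k - 1`. Newton's interpolation formula, applied in one variable at a time, shows that such a
function is a polynomial of degree at most `k - 2` (Fréchet).
-/

open Filter Finset Topology
open scoped fwdDiff Matrix

section Differences

variable {V W G : Type*} [AddCommMonoid V] [AddCommMonoid W] [AddCommGroup G]

/-- The mixed iterated difference `Δ_[h₁] ⋯ Δ_[hₘ] f` with steps `l = [h₁, …, hₘ]`. Lists, unlike
the iterates `Δ_[h]^[m]`, allow unequal steps. -/
def fwdDiffList (l : List V) (f : V → G) : V → G := l.foldr fwdDiff f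

theorem fwdDiffList_nil (f : V → G) : fwdDiffList [] f = f := rfl

theorem fwdDiffList_cons (h : V) (l : List V) (f : V → G) :
    fwdDiffList (h :: l) f = Δ_[h] (fwdDiffList l f) := rfl

theorem fwdDiffList_append (l₁ l₂ : List V) (f : V → G) :
    fwdDiffList (l₁ ++ l₂) f = fwdDiffList l₁ (fwdDiffList l₂ f) := List.foldr_append

theorem fwdDiffList_sub (l : List V) (f g : V → G) :
    fwdDiffList l (f - g) = fwdDiffList l f - fwdDiffList l g := by
  induction l with
  | nil => rfl
  | cons h l ih =>
    ext x
    simp only [fwdDiffList_cons, ih, fwdDiff, Pi.sub_apply]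
    abel

theorem fwdDiffList_sum {ι : Type*} (s : Finset ι) (l : List V) (f : ι → V → G) :
    fwdDiffList l (∑ i ∈ s, f i) = ∑ i ∈ s, fwdDiffList l (f i) := by
  induction l with
  | nil => rfl
  | cons h l ih => simp only [fwdDiffList_cons, ih, fwdDiff_finsetSum]

theorem fwdDiffList_zero (l : List V) : fwdDiffList l (0 : V → G) = 0 := by
  simpa using fwdDiffList_sub l (0 : V → G) 0

theorem fwdDiff_comm (h k : V) (f : V → G) : Δ_[h] (Δ_[k] f) = Δ_[k] (Δ_[h] f) := by
  ext x
  simp only [fwdDiff, add_right_comm x k h]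
  abel

theorem fwdDiffList_fwdDiff (l : List V) (h : V) (f : V → G) :
    fwdDiffList l (Δ_[h] f) = fwdDiffList (h :: l) f := by
  induction l with
  | nil => rfl
  | cons k l ih => rw [fwdDiffList_cons, ih, fwdDiffList_cons, fwdDiff_comm]; rfl

theorem fwdDiffList_eq_zero_of_zero_mem {l : List V} (hl : 0 ∈ l) (f : V → G) :
    fwdDiffList l f = 0 := by
  induction l with
  | nil => simp at hl
  | cons h l ih =>
    ext x
    rcases List.mem_cons.1 hl with rfl | hl
    · simp [fwdDiffList_cons, fwdDiff]
    · simp [fwdDiffList_cons, fwdDiff, ih hl]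

theorem fwdDiffList_comp {ψ φ : V → W} (hψ : ∀ x h, ψ (x + h) = ψ x + φ h) (l : List V)
    (f : W → G) : fwdDiffList l (f ∘ ψ) = fwdDiffList (l.map φ) f ∘ ψ := by
  induction l with
  | nil => rfl
  | cons h l ih =>
    ext x
    simp only [List.map_cons, fwdDiffList_cons, fwdDiff, ih, Function.comp_apply, hψ]

end Differences

section ContinuousDifferences

variable {V G : Type*} [AddCommMonoid V] [TopologicalSpace V] [AddCommGroup G] [TopologicalSpace G]

/-- The mixed differences of `f` of order `m` are jointly continuous in the `m` steps and the base
point; `f` itself need not be continuous. -/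
def HasContinuousFwdDiff (m : ℕ) (f : V → G) : Prop :=
  Continuous fun p : (Fin m → V) × V => fwdDiffList (List.ofFn p.1) f p.2

theorem hasContinuousFwdDiff_of_continuous [ContinuousAdd V] [IsTopologicalAddGroup G] {f : V → G}
    (hf : Continuous f) (m : ℕ) : HasContinuousFwdDiff m f := by
  induction m with
  | zero => exact hf.comp continuous_snd
  | succ m ih =>
    simp only [HasContinuousFwdDiff, List.ofFn_succ, fwdDiffList_cons, fwdDiff]
    have htail : Continuous fun p : (Fin (m + 1) → V) × V => fun i : Fin m => p.1 i.succ := by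
      fun_prop
    have hshift : Continuous fun p : (Fin (m + 1) → V) × V => p.2 + p.1 0 := by fun_prop
    exact (ih.comp (htail.prodMk hshift)).sub (ih.comp (htail.prodMk continuous_snd))

theorem HasContinuousFwdDiff.sub [IsTopologicalAddGroup G] {m : ℕ} {f g : V → G}
    (hf : HasContinuousFwdDiff m f) (hg : HasContinuousFwdDiff m g) :
    HasContinuousFwdDiff m (f - g) :=
  (Continuous.sub hf hg).congr fun p => (congrFun (fwdDiffList_sub (List.ofFn p.1) f g) p.2).symm

theorem HasContinuousFwdDiff.fwdDiff {m : ℕ} {f : V → G} (hf : HasContinuousFwdDiff (m + 1) f)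
    (h : V) : HasContinuousFwdDiff m (Δ_[h] f) := by
  have hcons : Continuous fun p : (Fin m → V) × V =>
      ((Fin.cons h p.1 : Fin (m + 1) → V), p.2) := by fun_prop
  refine (hf.comp hcons).congr fun p => ?_
  simp only [Function.comp_apply, List.ofFn_cons, fwdDiffList_fwdDiff]

theorem HasContinuousFwdDiff.continuous_fwdDiffList {f : V → G} {l : List V}
    (hf : HasContinuousFwdDiff l.length f) : Continuous (fwdDiffList l f) := by
  simpa only [Function.comp_def, List.ofFn_get] using hf.comp (Continuous.prodMk_right l.get)

end ContinuousDifferences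

section Averaging

theorem sum_fwdDiff_nsmul_comm {V G : Type*} [AddCommMonoid V] [AddCommGroup G] (f : V → G)
    (x e : V) (m n : ℕ) :
    ∑ j ∈ range n, Δ_[m • e] f (x + j • e) = ∑ i ∈ range m, Δ_[n • e] f (x + i • e) := by
  have h₁ := sum_range_add (fun j => f (x + j • e)) m n
  have h₂ := sum_range_add (fun j => f (x + j • e)) n m
  rw [add_comm n m, h₁] at h₂
  simp only [fwdDiff, sum_sub_distrib, add_assoc, ← add_smul]
  rw [sub_eq_sub_iff_add_eq_add]
  simpa only [add_comm] using h₂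

theorem nsmul_fwdDiff_nsmul_eq {V G : Type*} [AddCommMonoid V] [AddCommGroup G] (f : V → G)
    (x e : V) (m n : ℕ) :
    n • Δ_[m • e] f x =
      ∑ i ∈ range m, Δ_[n • e] f (x + i • e) - ∑ j ∈ range n, Δ_[m • e] (Δ_[j • e] f) x := by
  rw [← sum_fwdDiff_nsmul_comm, ← sum_sub_distrib, ← card_range n, ← sum_const, card_range]
  refine sum_congr rfl fun j _ => ?_
  simp only [fwdDiff, add_right_comm x]
  abel

variable {E : Type*} [NormedAddCommGroup E] [NormedSpace ℝ E]

theorem norm_fwdDiff_le_add_mul {u : ℚ → E} {x d : ℚ} {ε B : ℝ} (hd : 0 ≤ d)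
    (hε : ∀ h ∈ Set.Icc (0 : ℚ) 1, ‖Δ_[d] (Δ_[h] u) x‖ ≤ ε)
    (hB : ∀ s ∈ Set.Icc x (x + d), ‖Δ_[1] u s‖ ≤ B) : ‖Δ_[d] u x‖ ≤ ε + d * B := by
  obtain ⟨m, n, hn, rfl⟩ : ∃ m n : ℕ, 0 < n ∧ d = m • (1 / n : ℚ) := by
    lift d to ℚ≥0 using hd
    exact ⟨d.num, d.den, d.den_pos, by simp [← div_eq_mul_inv, NNRat.cast_def]⟩
  set e : ℚ := 1 / n
  have he : n • e = 1 := by simp [e, hn.ne']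
  have hn' : (0 : ℝ) < n := Nat.cast_pos.2 hn
  -- With `d = m • e`, this writes `n • Δ_[d] u x` as `m` differences of step `1`, up to an error of
  -- `n` second differences.
  have hmul := nsmul_fwdDiff_nsmul_eq u x e m n
  have hsumB : ‖∑ i ∈ range m, Δ_[n • e] u (x + i • e)‖ ≤ m * B := by
    rw [he]
    refine (norm_sum_le _ _).trans ((sum_le_card_nsmul _ _ B fun i hi => ?_).trans_eq ?_)
    · have : i • e ≤ m • e := nsmul_le_nsmul_left (by positivity) (mem_range.1 hi).le
      exact hB _ ⟨le_add_of_nonneg_right (by positivity), by gcongr⟩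
    · simp
  have hsumε : ‖∑ j ∈ range n, Δ_[m • e] (Δ_[j • e] u) x‖ ≤ n * ε := by
    refine (norm_sum_le _ _).trans ((sum_le_card_nsmul _ _ ε fun j hj => ?_).trans_eq ?_)
    · refine hε _ ⟨by positivity, he ▸ nsmul_le_nsmul_left (by positivity) (mem_range.1 hj).le⟩
    · simp
  have hle : n * ‖Δ_[m • e] u x‖ ≤ m * B + n * ε := by
    rw [← nsmul_eq_mul, ← RCLike.norm_nsmul ℝ, hmul]
    exact (norm_sub_le _ _).trans (add_le_add hsumB hsumε)
  have hcast : ((m • e : ℚ) : ℝ) * n = m := by simp [e, hn.ne']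
  refine le_of_mul_le_mul_left (hle.trans_eq ?_) hn'
  rw [← hcast]
  ring

theorem norm_fwdDiff_le_of_fwdDiffList {m : ℕ} {u : ℚ → E} {x d : ℚ} {ε B : ℝ} (hd : 0 ≤ d)
    (hε : ∀ l : List ℚ, l.length = m → (∀ h ∈ l, h ∈ Set.Icc 0 1) →
      ‖Δ_[d] (fwdDiffList l u) x‖ ≤ ε)
    (hB : ∀ s ∈ Set.Icc x (x + d + m), ‖Δ_[1] u s‖ ≤ B) :
    ‖Δ_[d] u x‖ ≤ ε + (2 ^ m - 1) * (d * B) := by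
  induction m generalizing u B with
  | zero => simpa [fwdDiffList_nil] using hε [] rfl (by simp)
  | succ m ih =>
    push_cast at hB
    have hstep : ∀ h ∈ Set.Icc (0 : ℚ) 1,
        ‖Δ_[d] (Δ_[h] u) x‖ ≤ ε + (2 ^ m - 1) * (d * (2 * B)) := by
      rintro h ⟨hh0, hh1⟩
      refine ih (fun l hl hmem => ?_) fun s ⟨hxs, hsx⟩ => ?_
      · rw [fwdDiffList_fwdDiff]
        exact hε (h :: l) (by simp [hl]) (List.forall_mem_cons.2 ⟨⟨hh0, hh1⟩, hmem⟩)
      · rw [fwdDiff_comm, two_mul]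
        exact (norm_sub_le _ _).trans (add_le_add (hB _ ⟨by linarith, by linarith⟩)
          (hB _ ⟨hxs, by linarith⟩))
    refine (norm_fwdDiff_le_add_mul hd hstep fun s ⟨hxs, hsx⟩ => hB s ⟨hxs, ?_⟩).trans_eq (by ring)
    have : (0 : ℚ) ≤ m := m.cast_nonneg
    linarith

end Averaging

section Extension

theorem cauchy_map_of_uniformContinuousOn {α β : Type*} [UniformSpace α] [UniformSpace β]
    {f : α → β} {s : Set α} {l : Filter α} (hf : UniformContinuousOn f s) (hl : Cauchy l)
    (hs : s ∈ l) : Cauchy (map f l) :=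
  cauchy_map_iff.2 ⟨hl.1, hf.mono_left <| le_inf hl.2 <| le_principal_iff.2 <| prod_mem_prod hs hs⟩

theorem exists_continuous_extension_of_locally_uniformContinuousOn {α β γ : Type*}
    [UniformSpace α] [UniformSpace β] [UniformSpace γ] [CompleteSpace γ] [T0Space γ] {e : α → β}
    (he : IsUniformInducing e) (hde : DenseRange e) {f : α → γ}
    (hf : ∀ b, ∃ s ∈ 𝓝 b, UniformContinuousOn f (e ⁻¹' s)) :
    ∃ g : β → γ, Continuous g ∧ ∀ a, g (e a) = f a := by
  have hdi : IsDenseInducing e := ⟨he.isInducing, hde⟩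
  have hcauchy : ∀ b, Cauchy (map f (comap e (𝓝 b))) := fun b => by
    obtain ⟨s, hs, hfs⟩ := hf b
    have := hdi.comap_nhds_neBot b
    exact cauchy_map_of_uniformContinuousOn hfs (cauchy_nhds.comap he.comap_uniformity.le)
      (preimage_mem_comap hs)
  have hcont : Continuous f := continuous_iff_continuousAt.2 fun a => by
    obtain ⟨s, hs, hfs⟩ := hf (e a)
    exact hfs.continuousOn.continuousAt (he.isInducing.continuous.continuousAt hs)
  exact ⟨hdi.extend f, hdi.continuous_extend_of_cauchy hcauchy, hdi.extend_eq hcont⟩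

end Extension

section RationalPoints

theorem HasContinuousFwdDiff.fwdDiffList_eq_zero_of_ratCast {G : Type*} [AddCommGroup G]
    [TopologicalSpace G] [T2Space G] {m : ℕ} {F : ℝ → G} (hF : HasContinuousFwdDiff m F)
    (hzero : ∀ q : ℚ, F q = 0) {l : List ℝ} (hl : l.length = m) : fwdDiffList l F = 0 := by
  subst hl
  have hdense : DenseRange
      (Prod.map (Pi.map fun _ : Fin l.length => ((↑) : ℚ → ℝ)) ((↑) : ℚ → ℝ)) :=
    (DenseRange.piMap fun _ => Rat.isDenseEmbedding_coe_real.dense).prodMap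
      Rat.isDenseEmbedding_coe_real.dense
  have heq : (fun p : (Fin l.length → ℝ) × ℝ => fwdDiffList (List.ofFn p.1) F p.2) = 0 := by
    refine hdense.equalizer hF continuous_zero (funext fun ⟨h, q⟩ => ?_)
    have hcast := congrFun (fwdDiffList_comp Rat.cast_add (List.ofFn h) F) q
    have hF0 : F ∘ ((↑) : ℚ → ℝ) = 0 := funext hzero
    rw [hF0, fwdDiffList_zero, List.map_ofFn] at hcast
    exact hcast.symm
  ext x
  simpa only [List.ofFn_get, Pi.zero_apply] using congrFun heq (l.get, x)

variable {E : Type*} [NormedAddCommGroup E] [NormedSpace ℝ E]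

theorem norm_ratCast_sub_le_of_fwdDiffList {m : ℕ} {F : ℝ → E} {x y : ℚ} {ε B : ℝ} (hxy : x ≤ y)
    (hε : ∀ l : List ℝ, l.length = m → (∀ h ∈ l, h ∈ Set.Icc 0 1) →
      ‖fwdDiffList l F y - fwdDiffList l F x‖ ≤ ε)
    (hB : ∀ s : ℚ, (s : ℝ) ∈ Set.Icc (x : ℝ) (y + m) → ‖Δ_[1] F s‖ ≤ B) :
    ‖F y - F x‖ ≤ ε + (2 ^ m - 1) * ((y - x) * B) := by
  have hcast (l : List ℚ) :
      fwdDiffList l (F ∘ ((↑) : ℚ → ℝ)) = fwdDiffList (l.map (↑)) F ∘ (↑) :=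
    fwdDiffList_comp Rat.cast_add l F
  have hmain : ‖Δ_[y - x] (F ∘ ((↑) : ℚ → ℝ)) x‖ ≤ ε + (2 ^ m - 1) * ((y - x : ℚ) * B) := by
    refine norm_fwdDiff_le_of_fwdDiffList (sub_nonneg.2 hxy) (fun l hl hmem => ?_) fun s hs => ?_
    · simp only [fwdDiff, hcast, Function.comp_apply, add_sub_cancel]
      refine hε _ (by simpa using hl) (List.forall_mem_map.2 fun h hh => ?_)
      exact ⟨mod_cast (hmem h hh).1, mod_cast (hmem h hh).2⟩
    · rw [add_sub_cancel] at hs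
      simpa [fwdDiff] using hB s ⟨mod_cast hs.1, mod_cast hs.2⟩
  simpa [fwdDiff] using hmain

theorem HasContinuousFwdDiff.exists_dist_ratCast_le {m : ℕ} {F g : ℝ → E}
    (hF : HasContinuousFwdDiff m F) (hg : Continuous g) (hFg : ∀ q : ℚ, Δ_[1] F q = g q) (b : ℝ)
    {ε : ℝ} (hε : 0 < ε) :
    ∃ δ > 0, ∃ C, ∀ x y : ℚ, (x : ℝ) ∈ Metric.closedBall b 1 → (y : ℝ) ∈ Metric.closedBall b 1 →
      dist x y < δ → dist (F x) (F y) ≤ ε + C * dist x y := by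
  have hK : IsCompact ((Set.univ.pi fun _ : Fin m => Set.Icc (0 : ℝ) 1) ×ˢ Metric.closedBall b 1) :=
    (isCompact_univ_pi fun _ => isCompact_Icc).prod (isCompact_closedBall b 1)
  obtain ⟨δ, hδ, hδF⟩ := Metric.uniformContinuousOn_iff.1
    (hK.uniformContinuousOn_of_continuous (Continuous.continuousOn hF)) ε hε
  obtain ⟨B, hB⟩ := (isCompact_Icc (a := b - 1) (b := b + 1 + m)).exists_bound_of_continuousOn
    hg.continuousOn
  refine ⟨δ, hδ, (2 ^ m - 1) * B, fun x y hx hy hxy => ?_⟩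
  wlog hle : x ≤ y generalizing x y
  · rw [dist_comm, dist_comm x]
    exact this y x hy hx (by rwa [dist_comm]) (le_of_not_ge hle)
  have hbound : ‖F y - F x‖ ≤ ε + (2 ^ m - 1) * ((y - x) * B) := by
    refine norm_ratCast_sub_le_of_fwdDiffList hle (fun l hl hmem => ?_) fun s ⟨hxs, hsy⟩ => ?_
    · subst hl
      have hmem' : l.get ∈ Set.univ.pi fun _ => Set.Icc (0 : ℝ) 1 :=
        fun i _ => hmem _ (l.get_mem i)
      have hdist := hδF (l.get, (y : ℝ)) ⟨hmem', hy⟩ (l.get, (x : ℝ)) ⟨hmem', hx⟩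
        (by simpa [Prod.dist_eq, hδ, dist_comm] using hxy)
      simpa only [List.ofFn_get, dist_eq_norm] using hdist.le
    · rw [Real.closedBall_eq_Icc] at hx hy
      rw [hFg]
      exact hB s ⟨hx.1.trans hxs, hsy.trans (by linarith [hy.2])⟩
  have hdist : dist x y = (y - x : ℝ) := by
    rw [dist_comm, Rat.dist_eq, abs_of_nonneg (sub_nonneg.2 (Rat.cast_le.2 hle))]
  rw [dist_comm, dist_eq_norm, hdist]
  exact hbound.trans_eq (by ring)

theorem HasContinuousFwdDiff.uniformContinuousOn_ratCast {m : ℕ} {F g : ℝ → E}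
    (hF : HasContinuousFwdDiff m F) (hg : Continuous g) (hFg : ∀ q : ℚ, Δ_[1] F q = g q) (b : ℝ) :
    UniformContinuousOn (fun q : ℚ => F q) ((↑) ⁻¹' Metric.closedBall b 1) := by
  refine Metric.uniformContinuousOn_iff.2 fun ε hε => ?_
  obtain ⟨δ, hδ, C, hC⟩ := hF.exists_dist_ratCast_le hg hFg b (half_pos hε)
  have hC' : 0 < |C| + 1 := by positivity
  refine ⟨min δ (ε / 2 / (|C| + 1)), by positivity, fun x hx y hy hxy => ?_⟩
  have hxyC : dist x y * (|C| + 1) < ε / 2 :=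
    (lt_div_iff₀ hC').1 (hxy.trans_le (min_le_right _ _))
  calc dist (F x) (F y) ≤ ε / 2 + C * dist x y := hC x y hx hy (hxy.trans_le (min_le_left _ _))
    _ ≤ ε / 2 + dist x y * (|C| + 1) := by
      rw [mul_comm C]
      gcongr
      exact (le_abs_self C).trans (le_add_of_nonneg_right zero_le_one)
    _ < ε := by linarith

theorem HasContinuousFwdDiff.exists_continuous_eq_ratCast [CompleteSpace E] {m : ℕ} {F : ℝ → E}
    (hF : HasContinuousFwdDiff m F) : ∃ g : ℝ → E, Continuous g ∧ ∀ q : ℚ, g q = F q := by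
  induction m generalizing F with
  | zero => exact ⟨F, hF.continuous_fwdDiffList (l := []), fun q => rfl⟩
  | succ m ih =>
    obtain ⟨g, hg, hgF⟩ := ih (hF.fwdDiff 1)
    exact exists_continuous_extension_of_locally_uniformContinuousOn
      Rat.isUniformEmbedding_coe_real.isUniformInducing Rat.isDenseEmbedding_coe_real.dense
      fun b => ⟨_, Metric.closedBall_mem_nhds b one_pos,
        hF.uniformContinuousOn_ratCast hg (fun q => (hgF q).symm) b⟩

theorem HasContinuousFwdDiff.exists_continuous_fwdDiffList_sub_eq_zero [CompleteSpace E] {m : ℕ}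
    {F : ℝ → E} (hF : HasContinuousFwdDiff m F) :
    ∃ g : ℝ → E, Continuous g ∧ ∀ l : List ℝ, l.length = m → fwdDiffList l (F - g) = 0 := by
  obtain ⟨g, hg, hgF⟩ := hF.exists_continuous_eq_ratCast
  have hsub := hF.sub (hasContinuousFwdDiff_of_continuous hg m)
  exact ⟨g, hg, fun l => hsub.fwdDiffList_eq_zero_of_ratCast fun q => sub_eq_zero.2 (hgF q).symm⟩

end RationalPoints

section Ridge

theorem exists_forall_dotProduct_eq {ι n K : Type*} [Finite ι] [Fintype n] [Field K] {a : ι → n → K}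
    (ha : LinearIndependent K a) (c : ι → K) : ∃ v : n → K, ∀ i, a i ⬝ᵥ v = c i := by
  cases nonempty_fintype ι
  have hrange : LinearMap.range (Matrix.of a).mulVecLin = ⊤ :=
    Submodule.eq_top_of_finrank_eq <|
      ha.rank_matrix.trans (Module.finrank_fintype_fun_eq_card K).symm
  obtain ⟨v, hv⟩ := LinearMap.range_eq_top.1 hrange c
  exact ⟨v, congrFun hv⟩

theorem fwdDiffList_comp_dotProduct {n K G : Type*} [Fintype n] [CommRing K] [AddCommGroup G]
    (c : n → K) (l : List (n → K)) (F : K → G) :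
    fwdDiffList l (fun x => F (c ⬝ᵥ x)) = fun x => fwdDiffList (l.map (c ⬝ᵥ ·)) F (c ⬝ᵥ x) :=
  fwdDiffList_comp (dotProduct_add c) l F

variable {ι n : Type*} [Fintype ι] [Fintype n] {a : ι → n → ℝ}

theorem hasContinuousFwdDiff_of_sum_ridge {G : Type*} [AddCommGroup G] [TopologicalSpace G]
    [IsTopologicalAddGroup G] {f : (n → ℝ) → G} {F : ι → ℝ → G}
    (hind : Pairwise fun i j => LinearIndependent ℝ ![a i, a j]) (hf : Continuous f)
    (hrepr : ∀ x, f x = ∑ i, F i (a i ⬝ᵥ x)) {i : ι} (hi : a i ≠ 0) :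
    HasContinuousFwdDiff (Fintype.card ι - 1) (F i) := by
  classical
  let e : Fin (Fintype.card ι - 1) ≃ {j // j ≠ i} :=
    (Fintype.equivFinOfCardEq (by simp [Fintype.card_subtype_compl])).symm
  have hv (j : {j // j ≠ i}) : ∃ v, a i ⬝ᵥ v = 1 ∧ a j ⬝ᵥ v = 0 := by
    obtain ⟨v, hv⟩ := exists_forall_dotProduct_eq (hind j.2.symm) ![1, 0]
    exact ⟨v, hv 0, hv 1⟩
  choose v hiv hjv using hv
  obtain ⟨w, hw⟩ : ∃ w, a i ⬝ᵥ w = 1 := by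
    have hli : LinearIndependent ℝ fun _ : Unit => a i := LinearIndependent.of_subsingleton () hi
    obtain ⟨w, hw⟩ := exists_forall_dotProduct_eq hli 1
    exact ⟨w, hw ()⟩
  have hlift : Continuous fun p : (Fin (Fintype.card ι - 1) → ℝ) × ℝ =>
      ((fun r => p.1 r • v (e r)), p.2 • w) := by fun_prop
  refine ((hasContinuousFwdDiff_of_continuous hf _).comp hlift).congr fun p => ?_
  have hf_eq : f = ∑ j, fun x => F j (a j ⬝ᵥ x) := by
    ext x
    simp [hrepr]
  simp only [Function.comp_apply, hf_eq, fwdDiffList_sum, Finset.sum_apply,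
    fwdDiffList_comp_dotProduct, List.map_ofFn]
  rw [sum_eq_single i]
  · simp [Function.comp_def, dotProduct_smul, hiv, hw]
  · intro j _ hji
    rw [fwdDiffList_eq_zero_of_zero_mem, Pi.zero_apply]
    exact List.mem_ofFn.2 ⟨e.symm ⟨j, hji⟩, by simp [dotProduct_smul, hjv ⟨j, hji⟩]⟩
  · simp

theorem exists_continuous_fwdDiffList_ridge_sub_eq_zero {E : Type*} [NormedAddCommGroup E]
    [NormedSpace ℝ E] [CompleteSpace E] {f : (n → ℝ) → E} {F : ι → ℝ → E}
    (hind : Pairwise fun i j => LinearIndependent ℝ ![a i, a j]) (hf : Continuous f)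
    (hrepr : ∀ x, f x = ∑ i, F i (a i ⬝ᵥ x)) (i : ι) :
    ∃ g : ℝ → E, Continuous g ∧ ∀ l : List (n → ℝ), l.length = Fintype.card ι - 1 →
      fwdDiffList l (fun x => (F i - g) (a i ⬝ᵥ x)) = 0 := by
  by_cases hi : a i = 0
  · refine ⟨fun _ => F i 0, continuous_const, fun l _ => ?_⟩
    convert fwdDiffList_zero l using 2
    ext x
    simp [hi]
  · obtain ⟨g, hg, hgF⟩ := (hasContinuousFwdDiff_of_sum_ridge hind hf hrepr
      hi).exists_continuous_fwdDiffList_sub_eq_zero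
    refine ⟨g, hg, fun l hl => ?_⟩
    rw [fwdDiffList_comp_dotProduct, hgF _ (by rwa [List.length_map])]
    rfl

end Ridge

section Polynomials

theorem fwdDiffList_polynomial_eval_eq_zero {R : Type*} [CommRing R] {p : Polynomial R} {l : List R}
    (hp : p.degree < l.length) : fwdDiffList l (fun t => p.eval t) = 0 := by
  induction l generalizing p with
  | nil =>
    obtain rfl : p = 0 := Polynomial.degree_eq_bot.1 (Nat.WithBot.lt_zero_iff.1 hp)
    ext t
    simp [fwdDiffList_nil]
  | cons h l ih =>
    have hdiff : Δ_[h] (fun t => p.eval t) = fun t => (Polynomial.taylor h p - p).eval t := by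
      ext t
      simp [fwdDiff, Polynomial.taylor_eval]
    rw [← fwdDiffList_fwdDiff, hdiff]
    refine ih ?_
    rcases eq_or_ne p 0 with rfl | hp0
    · simp
    · have hlt : (Polynomial.taylor h p - p).degree < p.degree :=
        Polynomial.degree_sub_lt_right (Polynomial.degree_taylor p h) hp0
          (Polynomial.leadingCoeff_taylor ..)
      exact hlt.trans_le (Polynomial.degree_le_of_natDegree_le
        (Nat.le_of_lt_succ ((Polynomial.natDegree_lt_iff_degree_lt hp0).2 hp)))

theorem exists_natDegree_le_eval_eq_choose (K : Type*) [Field K] [CharZero K] (j : ℕ) :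
    ∃ p : Polynomial K, p.natDegree ≤ j ∧ ∀ t, p.eval t = Ring.choose t j := by
  refine ⟨(j.factorial : K)⁻¹ • descPochhammer K j, ?_, fun t => ?_⟩
  · exact (Polynomial.natDegree_smul_le _ _).trans (descPochhammer_natDegree K j).le
  · rw [Ring.choose_eq_smul, Polynomial.eval_smul, ← descPochhammer_map (algebraMap ℤ K),
      Polynomial.eval_map_algebraMap, Polynomial.aeval_eq_smeval]

theorem exists_degree_lt_eval_eq_sum_choose {K : Type*} [Field K] [CharZero K] (m : ℕ)
    (c : ℕ → K) : ∃ p : Polynomial K, p.degree < m ∧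
      ∀ t, p.eval t = ∑ j ∈ range m, Ring.choose t j * c j := by
  choose b hbdeg hb using exists_natDegree_le_eval_eq_choose K
  refine ⟨∑ j ∈ range m, Polynomial.C (c j) * b j, ?_, fun t => ?_⟩
  · refine (Polynomial.degree_sum_le _ _).trans_lt ?_
    refine (Finset.sup_lt_iff (WithBot.bot_lt_coe m)).2 fun j hj => ?_
    refine (Polynomial.degree_le_of_natDegree_le (n := j) ?_).trans_lt
      (WithBot.coe_lt_coe.2 (mem_range.1 hj))
    exact (Polynomial.natDegree_C_mul_le _ _).trans (hbdeg j)
  · simp [Polynomial.eval_finsetSum, hb, mul_comm]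

theorem eq_apply_zero_of_fwdDiff_one_eq_zero {E : Type*} [NormedAddCommGroup E] [NormedSpace ℝ E]
    {m : ℕ} {w : ℝ → E} (hw : Continuous w)
    (hzero : ∀ l : List ℝ, l.length = m → fwdDiffList l w = 0) (hw1 : Δ_[1] w = 0) (t : ℝ) :
    w t = w 0 := by
  have hle (x y : ℚ) (hxy : x ≤ y) : w y = w x := by
    have := norm_ratCast_sub_le_of_fwdDiffList (F := w) (m := m) (ε := 0) (B := 0) hxy
      (fun l hl _ => by simp [hzero l hl]) (fun s _ => by simp [hw1])
    simpa [sub_eq_zero] using this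
  have hrat (q : ℚ) : w q = w 0 := by
    rcases le_total 0 q with hq | hq
    · simpa using hle 0 q hq
    · simpa using (hle q 0 hq).symm
  exact congrFun (Rat.isDenseEmbedding_coe_real.dense.equalizer hw continuous_const
    (funext hrat)) t

theorem eq_sum_choose_mul_fwdDiffList_replicate {m : ℕ} {u : ℝ → ℝ} (hu : Continuous u)
    (hzero : ∀ l : List ℝ, l.length = m → fwdDiffList l u = 0) (t : ℝ) :
    u t = ∑ j ∈ range m, Ring.choose t j * fwdDiffList (.replicate j 1) u 0 := by
  induction m generalizing u t with
  | zero => simpa [fwdDiffList_nil] using congrFun (hzero [] rfl) t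
  | succ m ih =>
    let c (j : ℕ) : ℝ := fwdDiffList (.replicate j 1) u 0
    obtain ⟨p, hpdeg, hp⟩ := exists_degree_lt_eval_eq_sum_choose (m + 1) c
    have hΔu (t : ℝ) : Δ_[1] u t = ∑ j ∈ range m, Ring.choose t j * c (j + 1) := by
      simpa only [fwdDiffList_fwdDiff, ← List.replicate_succ] using ih (u := Δ_[1] u)
        (by unfold fwdDiff; fun_prop)
        (fun l hl => (fwdDiffList_fwdDiff l 1 u).trans (hzero _ (by simp [hl]))) t
    have hΔp (t : ℝ) : Δ_[1] (fun t => p.eval t) t =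
        ∑ j ∈ range m, Ring.choose t j * c (j + 1) := by
      simp only [fwdDiff, hp, sum_range_succ', Ring.choose_succ_succ, Ring.choose_zero_right,
        add_mul, sum_add_distrib]
      ring
    have hp0 : p.eval 0 = u 0 := by
      simp [hp, sum_range_succ', Ring.choose_zero_succ, c, fwdDiffList_nil]
    have hw := eq_apply_zero_of_fwdDiff_one_eq_zero (w := u - fun t => p.eval t) (m := m + 1)
      (hu.sub p.continuous) (fun l hl => ?_) ?_ t
    · simp only [Pi.sub_apply, hp0, sub_self] at hw
      rw [sub_eq_zero.1 hw, hp]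
    · rw [fwdDiffList_sub, hzero l hl, fwdDiffList_polynomial_eval_eq_zero (hl ▸ hpdeg), sub_zero]
    · ext t
      calc Δ_[1] (u - fun t => p.eval t) t = Δ_[1] u t - Δ_[1] (fun t => p.eval t) t := by
            simp only [fwdDiff, Pi.sub_apply]
            ring
        _ = 0 := by rw [hΔu, hΔp, sub_self]

theorem eq_sum_choose_mul_fwdDiffList_replicate_of_line {V : Type*} [AddCommGroup V] [Module ℝ V]
    [TopologicalSpace V] [ContinuousAdd V] [ContinuousSMul ℝ V] {m : ℕ} {Q : V → ℝ}
    (hQ : Continuous Q) (hzero : ∀ l : List V, l.length = m → fwdDiffList l Q = 0) (y v : V)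
    (t : ℝ) :
    Q (y + t • v) = ∑ j ∈ range m, Ring.choose t j * fwdDiffList (.replicate j v) Q y := by
  have hline (l : List ℝ) : fwdDiffList l (Q ∘ fun t : ℝ => y + t • v) =
      fwdDiffList (l.map (· • v)) Q ∘ fun t => y + t • v :=
    fwdDiffList_comp (fun t h => by rw [add_smul, add_assoc]) l Q
  have hnewton := eq_sum_choose_mul_fwdDiffList_replicate (m := m)
    (hQ.comp (by fun_prop : Continuous fun t : ℝ => y + t • v))
    (fun l hl => by rw [hline, hzero _ (by simpa using hl)]; rfl) t
  simpa [hline] using hnewton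

theorem totalDegree_aeval_X_le {R σ : Type*} [CommSemiring R] (i : σ) (p : Polynomial R) :
    (Polynomial.aeval (MvPolynomial.X i : MvPolynomial σ R) p).totalDegree ≤ p.natDegree := by
  rw [Polynomial.aeval_eq_sum_range]
  refine MvPolynomial.totalDegree_finsetSum_le fun j hj => ?_
  refine (MvPolynomial.totalDegree_smul_le _ _).trans ?_
  rw [MvPolynomial.X_pow_eq_monomial]
  refine (MvPolynomial.totalDegree_monomial_le _ _).trans ?_
  rw [Finsupp.sum_single_index rfl]
  exact Nat.le_of_lt_succ (mem_range.1 hj)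

theorem exists_mvPolynomial_eval_eq_eval_mul_eval_tail {R : Type*} [CommSemiring R] {n : ℕ}
    (p : Polynomial R) (P : MvPolynomial (Fin n) R) :
    ∃ S : MvPolynomial (Fin (n + 1)) R, S.totalDegree ≤ p.natDegree + P.totalDegree ∧
      ∀ x, MvPolynomial.eval x S = p.eval (x 0) * MvPolynomial.eval (Fin.tail x) P := by
  refine ⟨Polynomial.aeval (MvPolynomial.X 0) p * MvPolynomial.rename Fin.succ P, ?_, fun x => ?_⟩
  · exact (MvPolynomial.totalDegree_mul _ _).trans
      (add_le_add (totalDegree_aeval_X_le 0 p) (MvPolynomial.totalDegree_rename_le _ P))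
  · rw [map_mul, MvPolynomial.eval_rename, Polynomial.aeval_eq_sum_range,
      Polynomial.eval_eq_sum_range]
    simp [MvPolynomial.smul_eval, Function.comp_def, Fin.tail_def]

theorem exists_mvPolynomial_of_fwdDiffList_eq_zero {n m : ℕ} {Q : (Fin n → ℝ) → ℝ}
    (hQ : Continuous Q) (hzero : ∀ l : List (Fin n → ℝ), l.length = m → fwdDiffList l Q = 0) :
    ∃ P : MvPolynomial (Fin n) ℝ, P.totalDegree ≤ m - 1 ∧ ∀ x, Q x = MvPolynomial.eval x P := by
  induction n generalizing m with
  | zero =>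
    refine ⟨MvPolynomial.C (Q 0), by simp, fun x => ?_⟩
    rw [MvPolynomial.eval_C, Subsingleton.elim x 0]
  | succ n ih =>
    let e : Fin (n + 1) → ℝ := Pi.single 0 1
    let ψ (y : Fin n → ℝ) : Fin (n + 1) → ℝ := Fin.cons 0 y
    have hψ : Continuous ψ := by fun_prop
    have hψ_add (y h : Fin n → ℝ) : ψ (y + h) = ψ y + ψ h := by
      ext i
      cases i using Fin.cases <;> simp [ψ]
    let R (j : ℕ) : (Fin n → ℝ) → ℝ := fwdDiffList (.replicate j e) Q ∘ ψ
    have hR (j : ℕ) : Continuous (R j) :=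
      (hasContinuousFwdDiff_of_continuous hQ _).continuous_fwdDiffList.comp hψ
    have hRzero (j : ℕ) (hj : j ∈ range m) (l : List (Fin n → ℝ)) (hl : l.length = m - j) :
        fwdDiffList l (R j) = 0 := by
      rw [fwdDiffList_comp hψ_add, ← fwdDiffList_append, hzero]
      · rfl
      · simp [hl, Nat.sub_add_cancel (mem_range.1 hj).le]
    choose! P hPdeg hP using fun j hj => ih (hR j) (hRzero j hj)
    choose b hbdeg hb using exists_natDegree_le_eval_eq_choose ℝ
    choose S hSdeg hS using fun j => exists_mvPolynomial_eval_eq_eval_mul_eval_tail (b j) (P j)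
    refine ⟨∑ j ∈ range m, S j, MvPolynomial.totalDegree_finsetSum_le fun j hj => ?_, fun x => ?_⟩
    · have hjm := mem_range.1 hj
      have hdeg := (hSdeg j).trans (add_le_add (hbdeg j) (hPdeg j hj))
      omega
    · have hx : x = ψ (Fin.tail x) + x 0 • e := by
        ext i
        cases i using Fin.cases <;> simp [ψ, e, Fin.tail]
      calc Q x = ∑ j ∈ range m, Ring.choose (x 0) j * R j (Fin.tail x) := by
            conv_lhs => rw [hx]
            exact eq_sum_choose_mul_fwdDiffList_replicate_of_line hQ hzero _ e (x 0)
        _ = MvPolynomial.eval x (∑ j ∈ range m, S j) := by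
            rw [map_sum]
            exact sum_congr rfl fun j hj => by rw [hS, hb, hP j hj]

end Polynomials

theorem stmt10_general {n : ℕ} {ι : Type*} [Fintype ι] (a : ι → Fin n → ℝ)
    (hind : Pairwise fun i j => LinearIndependent ℝ ![a i, a j])
    (f : (Fin n → ℝ) → ℝ) (hf : Continuous f) (F : ι → ℝ → ℝ)
    (hrepr : ∀ x, f x = ∑ i, F i (a i ⬝ᵥ x)) :
    ∃ (g : ι → ℝ → ℝ) (P : MvPolynomial (Fin n) ℝ),
      (∀ i, Continuous (g i)) ∧ P.totalDegree ≤ Fintype.card ι - 2 ∧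
      ∀ x, f x = (∑ i, g i (a i ⬝ᵥ x)) + MvPolynomial.eval x P := by
  choose g hg hgF using exists_continuous_fwdDiffList_ridge_sub_eq_zero hind hf hrepr
  let Q : (Fin n → ℝ) → ℝ := ∑ i, fun x => (F i - g i) (a i ⬝ᵥ x)
  have hQf (x : Fin n → ℝ) : Q x = f x - ∑ i, g i (a i ⬝ᵥ x) := by
    simp [Q, hrepr]
  have hQ : Continuous Q := by
    rw [funext hQf]
    fun_prop
  have hQzero (l : List (Fin n → ℝ)) (hl : l.length = Fintype.card ι - 1) :
      fwdDiffList l Q = 0 := by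
    rw [fwdDiffList_sum, sum_eq_zero fun i _ => hgF i l hl]
  obtain ⟨P, hPdeg, hP⟩ := exists_mvPolynomial_of_fwdDiffList_eq_zero hQ hQzero
  exact ⟨g, P, hg, hPdeg, fun x => by rw [← hP, hQf]; ring⟩

/-- If a continuous `f : ℝⁿ → ℝ` is a sum of arbitrarily behaved ridge
functions with pairwise linearly independent directions `a¹,...,aᵏ`, then it is
a sum of continuous ridge functions with the same directions plus a polynomial
of total degree at most `k - 1`. -/
theorem stmt10 {n k : ℕ} (a : Fin k → Fin n → ℝ)
    (hind : ∀ i j : Fin k, i ≠ j → LinearIndependent ℝ ![a i, a j])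
    (f : (Fin n → ℝ) → ℝ) (hf : Continuous f)
    (F : Fin k → ℝ → ℝ)
    (hrepr : ∀ x : Fin n → ℝ, f x = ∑ i, F i (∑ t, a i t * x t)) :
    ∃ (g : Fin k → ℝ → ℝ) (P : MvPolynomial (Fin n) ℝ),
      (∀ i, Continuous (g i)) ∧ P.totalDegree ≤ k - 1 ∧
      ∀ x : Fin n → ℝ, f x = (∑ i, g i (∑ t, a i t * x t)) + MvPolynomial.eval x P := by
  obtain ⟨g, P, hg, hP, hfg⟩ := stmt10_general a (fun i j hij => hind i j hij) f hf F hrepr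
  exact ⟨g, P, hg, hP.trans (by rw [Fintype.card_fin]; omega), hfg⟩
end

section
/- Let a^1, ..., a^k be pairwise linearly independent vectors in ℝ^n, let p be the maximal number of linearly independent vectors among a^1, ..., a^k, and let s be an integer with s ≥ k − p + 1. Suppose a function f ∈ C^s(ℝ^n) has the form f(x) = ∑_{i=1}^k f_i(a^i·x), where f_1, ..., f_k : ℝ → ℝ are arbitrarily behaved functions. Then there exist functions g_1, ..., g_k ∈ C^s(ℝ) and a polynomial P : ℝ^n → ℝ of total degree at most k − p + 1 such that f(x) = ∑_{i=1}^k g_i(a^i·x) + P(x) for all x ∈ ℝ^n. -/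
/-!
For each `i` with `aⁱ ≠ 0` there are `r = k - p + 1` vectors `h₁, …, hᵣ`, none of them orthogonal to
`aⁱ`, such that every other `aʲ` is orthogonal to one of them: a single vector takes care of the
rest of a basis through `aⁱ`, and by pairwise independence each of the `k - p` directions outside
the basis has a vector of its own. Iterated differences along the lines `ℝhₘ` therefore annihilate
every ridge function except the `i`-th one. Hence the iterated derivative of `f` along `h₁, …, hᵣ`
depends only on `aⁱ·x`, and integrating it `r` times yields `gᵢ ∈ Cˢ(ℝ)` such that `fᵢ - gᵢ` is
annihilated by all `r`-fold differences. So is then the smooth function `f - ∑ gᵢ(aⁱ·x)`, all of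
whose `r`-th derivatives vanish; by Taylor's formula it is a polynomial of degree less than `r`.
-/

section LineDifferences

open scoped fwdDiff

variable {R M N G : Type*} [AddCommGroup G]

/-- The functions annihilated by every iterated forward difference `Δ_[t₁ • h₁] ⋯ Δ_[tᵣ • hᵣ]` whose
steps lie on the lines spanned by `h₁, …, hᵣ`. For smooth functions this says that the iterated
directional derivative along `h₁, …, hᵣ` vanishes, but it makes sense without any regularity. -/
def lineDiffKer (R : Type*) [AddCommMonoid M] [SMul R M] :
    {r : ℕ} → (Fin r → M) → AddSubgroup (M → G)
  | 0, _ => ⊥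
  | _ + 1, h => ⨅ t : R, (lineDiffKer R (Fin.tail h)).comap
      (fwdDiff_aux.fwdDiffₗ M G (t • h 0)).toAddMonoidHom

theorem mem_lineDiffKer_zero [AddCommMonoid M] [SMul R M] {h : Fin 0 → M} {w : M → G} :
    w ∈ lineDiffKer R h ↔ w = 0 :=
  Iff.rfl

theorem mem_lineDiffKer_succ [AddCommMonoid M] [SMul R M] {r : ℕ} {h : Fin (r + 1) → M}
    {w : M → G} :
    w ∈ lineDiffKer R h ↔ ∀ t : R, Δ_[t • h 0] w ∈ lineDiffKer R (Fin.tail h) := by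
  simp only [lineDiffKer, AddSubgroup.mem_iInf]
  rfl

theorem fwdDiff_comm_s14 [AddCommMonoid M] (a b : M) (w : M → G) :
    Δ_[a] (Δ_[b] w) = Δ_[b] (Δ_[a] w) := by
  funext x
  simp only [fwdDiff, add_right_comm x a b]
  abel

theorem fwdDiff_comp_addMonoidHom [AddCommMonoid M] [AddCommMonoid N] (ℓ : M →+ N) (q : N → G)
    (v : M) : Δ_[v] (q ∘ ℓ) = Δ_[ℓ v] q ∘ ℓ := by
  funext x
  simp only [fwdDiff, Function.comp_apply, map_add]

theorem fwdDiff_mem_lineDiffKer [AddCommMonoid M] [SMul R M] {r : ℕ} {h : Fin r → M} {w : M → G}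
    (hw : w ∈ lineDiffKer R h) (v : M) : Δ_[v] w ∈ lineDiffKer R h := by
  induction r generalizing w with
  | zero => rw [mem_lineDiffKer_zero.mp hw]; exact mem_lineDiffKer_zero.mpr (fwdDiff_const v 0)
  | succ r ih =>
    refine mem_lineDiffKer_succ.mpr fun t => ?_
    rw [fwdDiff_comm_s14]
    exact ih (mem_lineDiffKer_succ.mp hw t)

theorem mem_lineDiffKer_of_fwdDiff_eq_zero [AddCommMonoid M] [SMul R M] {r : ℕ} {h : Fin r → M}
    {w : M → G} (m : Fin r) (hw : ∀ t : R, Δ_[t • h m] w = 0) : w ∈ lineDiffKer R h := by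
  induction r generalizing w with
  | zero => exact m.elim0
  | succ r ih =>
    refine mem_lineDiffKer_succ.mpr fun t => ?_
    cases m using Fin.cases with
    | zero => rw [hw]; exact zero_mem _
    | succ m =>
      refine ih m fun t' => ?_
      rw [fwdDiff_comm_s14]
      exact (congrArg _ (hw t')).trans (fwdDiff_const _ 0)

theorem lineDiffKer_le_lineDiffKer_smul [AddCommMonoid M] [Monoid R] [MulAction R M] {r : ℕ}
    (c : Fin r → R) (h : Fin r → M) :
    (lineDiffKer R h : AddSubgroup (M → G)) ≤ lineDiffKer R fun m => c m • h m := by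
  induction r with
  | zero => exact le_rfl
  | succ r ih =>
    refine fun w hw => mem_lineDiffKer_succ.mpr fun t => ih (Fin.tail c) (Fin.tail h) ?_
    rw [smul_smul]
    exact mem_lineDiffKer_succ.mp hw (t * c 0)

theorem lineDiffKer_le_of_forall_ne_zero {𝕜 : Type*} [DivisionRing 𝕜] {r : ℕ} {c : Fin r → 𝕜}
    (hc : ∀ m, c m ≠ 0) (d : Fin r → 𝕜) :
    (lineDiffKer 𝕜 c : AddSubgroup (𝕜 → G)) ≤ lineDiffKer 𝕜 d := by
  have hscale : (fun m => (d m / c m) • c m) = d := funext fun m => div_mul_cancel₀ (d m) (hc m)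
  exact (lineDiffKer_le_lineDiffKer_smul (fun m => d m / c m) c).trans_eq
    (congrArg (lineDiffKer 𝕜) hscale)

theorem comp_mem_lineDiffKer_iff [Semiring R] [AddCommMonoid M] [AddCommMonoid N] [Module R M]
    [Module R N] {ℓ : M →ₗ[R] N} (hℓ : Function.Surjective ℓ) {r : ℕ} {h : Fin r → M}
    {q : N → G} : q ∘ ℓ ∈ lineDiffKer R h ↔ q ∈ lineDiffKer R (ℓ ∘ h) := by
  induction r generalizing q with
  | zero => exact hℓ.injective_comp_right.eq_iff' rfl
  | succ r ih =>
    simp only [mem_lineDiffKer_succ]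
    refine forall_congr' fun t => ?_
    have hstep : Δ_[t • h 0] (q ∘ ℓ) = Δ_[t • (ℓ ∘ h) 0] q ∘ ℓ := by
      simpa using fwdDiff_comp_addMonoidHom ℓ.toAddMonoidHom q (t • h 0)
    rw [hstep, ih]
    rfl

theorem sum_comp_sub_comp_mem_lineDiffKer [Semiring R] [AddCommMonoid M] [AddCommMonoid N]
    [Module R M] [Module R N] {ι : Type*} [Fintype ι] (ℓ : ι → M →ₗ[R] N) (φ : ι → N → G) {r : ℕ}
    {h : Fin r → M} {i : ι} (hker : ∀ j ≠ i, ∃ m, ℓ j (h m) = 0) :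
    ∑ j, φ j ∘ ℓ j - φ i ∘ ℓ i ∈ lineDiffKer R h := by
  classical
  rw [← Finset.sum_erase_eq_sub (Finset.mem_univ i)]
  refine sum_mem fun j hj => ?_
  obtain ⟨m, hm⟩ := hker j (Finset.ne_of_mem_erase hj)
  refine mem_lineDiffKer_of_fwdDiff_eq_zero m fun t => ?_
  funext x
  simp [fwdDiff, hm]

end LineDifferences

section Smooth

open scoped fwdDiff

variable {E F : Type*} [NormedAddCommGroup E] [NormedSpace ℝ E] [NormedAddCommGroup F]
  [NormedSpace ℝ F]

theorem forall_fderiv_apply_eq_zero_iff_fwdDiff {w : E → F} (hw : Differentiable ℝ w) (h : E) :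
    (∀ x, fderiv ℝ w x h = 0) ↔ ∀ t : ℝ, Δ_[t • h] w = 0 := by
  constructor
  · intro hfderiv t
    funext x
    have hline : Differentiable ℝ fun t : ℝ => w (x + t • h) := by fun_prop
    have hconst := is_const_of_deriv_eq_zero hline
      (fun t => (hw _).deriv_comp_add_smul.trans (hfderiv _)) t 0
    simpa [fwdDiff, sub_eq_zero] using hconst
  · intro hdiff x
    have hconst : (fun t : ℝ => w (x + t • h)) = fun _ => w x :=
      funext fun t => sub_eq_zero.mp (congrFun (hdiff t) x)
    have hderiv := DifferentiableAt.deriv_comp_add_smul (y := h) (hw (x + (0 : ℝ) • h))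
    simpa [hconst] using hderiv.symm

theorem iteratedFDeriv_fwdDiff {r : ℕ} {w : E → F} (hw : ContDiff ℝ r w) (v : E) :
    iteratedFDeriv ℝ r (Δ_[v] w) = Δ_[v] (iteratedFDeriv ℝ r w) := by
  funext x
  have htrans : ContDiff ℝ r fun x => w (x + v) := by fun_prop
  exact (iteratedFDeriv_sub_apply htrans.contDiffAt hw.contDiffAt).trans
    (by rw [iteratedFDeriv_comp_add_right]; rfl)

theorem contDiff_fwdDiff {n : WithTop ℕ∞} {w : E → F} (hw : ContDiff ℝ n w) (v : E) :
    ContDiff ℝ n (Δ_[v] w) := by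
  unfold fwdDiff; fun_prop

theorem mem_lineDiffKer_iff_iteratedFDeriv_eq_zero {r : ℕ} {w : E → F} (hw : ContDiff ℝ r w)
    {h : Fin r → E} : w ∈ lineDiffKer ℝ h ↔ ∀ x, iteratedFDeriv ℝ r w x h = 0 := by
  induction r generalizing w with
  | zero => simp [mem_lineDiffKer_zero, funext_iff]
  | succ r ih =>
    have hw' : ContDiff ℝ r w := hw.of_le (by norm_cast; simp)
    have hdiff : Differentiable ℝ (iteratedFDeriv ℝ r w) :=
      hw.differentiable_iteratedFDeriv (by norm_cast; simp)
    have happly : Differentiable ℝ fun x => iteratedFDeriv ℝ r w x (Fin.tail h) := by fun_prop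
    simp only [mem_lineDiffKer_succ, (hdiff _).iteratedFDeriv_succ_apply_left',
      forall_fderiv_apply_eq_zero_iff_fwdDiff happly]
    refine forall_congr' fun t => ?_
    rw [ih (contDiff_fwdDiff hw' _), iteratedFDeriv_fwdDiff hw', funext_iff]
    rfl

theorem iteratedFDeriv_comp_apply {r : ℕ} (ℓ : E →L[ℝ] ℝ) {g : ℝ → F} (hg : ContDiff ℝ r g)
    (h : Fin r → E) (x : E) :
    iteratedFDeriv ℝ r (g ∘ ℓ) x h = (∏ m, ℓ (h m)) • iteratedDeriv r g (ℓ x) := by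
  rw [ℓ.iteratedFDeriv_comp_right hg x le_rfl,
    ContinuousMultilinearMap.compContinuousLinearMap_apply,
    iteratedFDeriv_apply_eq_iteratedDeriv_mul_prod]

theorem iteratedFDeriv_apply_add_of_sub_mem_lineDiffKer {r : ℕ} {h : Fin r → E} (ℓ : E →L[ℝ] ℝ)
    {f : E → F} (hf : ContDiff ℝ r f) {φ : ℝ → F} (hφ : f - φ ∘ ℓ ∈ lineDiffKer ℝ h) (x : E)
    {v : E} (hv : ℓ v = 0) : iteratedFDeriv ℝ r f (x + v) h = iteratedFDeriv ℝ r f x h := by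
  -- Translation by `v ∈ ker ℓ` does not change the non-smooth part `φ ∘ ℓ`.
  have hridge : Δ_[v] f = Δ_[v] (f - φ ∘ ℓ) := by
    funext x
    simp [fwdDiff, hv]
  have hmem : Δ_[v] f ∈ lineDiffKer ℝ h := hridge ▸ fwdDiff_mem_lineDiffKer hφ v
  have hzero := (mem_lineDiffKer_iff_iteratedFDeriv_eq_zero (contDiff_fwdDiff hf v)).mp hmem x
  rw [iteratedFDeriv_fwdDiff hf] at hzero
  exact sub_eq_zero.mp hzero

theorem contDiff_sub_sum_comp {ι : Type*} [Fintype ι] {n : WithTop ℕ∞} {f : E → F}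
    (hf : ContDiff ℝ n f) {g : ι → ℝ → F} (hg : ∀ i, ContDiff ℝ n (g i)) (ℓ : ι → E →L[ℝ] ℝ) :
    ContDiff ℝ n (f - ∑ i, g i ∘ ℓ i) := by
  simp only [Finset.sum_fn]
  exact hf.sub (ContDiff.sum fun i _ => (hg i).comp (ℓ i).contDiff)

variable [CompleteSpace F]

theorem exists_contDiff_deriv_eq {m : ℕ∞} {ψ : ℝ → F} (hψ : ContDiff ℝ m ψ) :
    ∃ g : ℝ → F, ContDiff ℝ (m + 1) g ∧ deriv g = ψ := by
  have hderiv (y : ℝ) : HasDerivAt (fun y => ∫ u in (0 : ℝ)..y, ψ u) (ψ y) y :=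
    (hψ.continuous.integral_hasStrictDerivAt 0 y).hasDerivAt
  have heq : deriv (fun y => ∫ u in (0 : ℝ)..y, ψ u) = ψ := funext fun y => (hderiv y).deriv
  refine ⟨_, contDiff_succ_iff_deriv.mpr ⟨fun y => (hderiv y).differentiableAt, by simp, ?_⟩, heq⟩
  rwa [heq]

theorem exists_contDiff_iteratedDeriv_eq (r : ℕ) {m : ℕ∞} {ψ : ℝ → F} (hψ : ContDiff ℝ m ψ) :
    ∃ g : ℝ → F, ContDiff ℝ (m + r) g ∧ iteratedDeriv r g = ψ := by
  induction r generalizing m ψ with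
  | zero => exact ⟨ψ, by simpa using hψ, iteratedDeriv_zero⟩
  | succ r ih =>
    obtain ⟨Ψ, hΨ, hderiv⟩ := exists_contDiff_deriv_eq hψ
    obtain ⟨g, hg, hgΨ⟩ := ih (m := m + 1) (by exact_mod_cast hΨ)
    refine ⟨g, hg.of_le (le_of_eq ?_), by rw [iteratedDeriv_succ, hgΨ, hderiv]⟩
    push_cast
    ring

theorem exists_contDiff_iteratedFDeriv_comp_eq {r : ℕ} {h : Fin r → E} {ℓ : E →L[ℝ] ℝ}
    (hsurj : Function.Surjective ℓ) (hℓ : ∀ m, ℓ (h m) ≠ 0) {s : ℕ∞} (hrs : r ≤ s) {f : E → F}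
    (hf : ContDiff ℝ s f)
    (hinv : ∀ x v, ℓ v = 0 → iteratedFDeriv ℝ r f (x + v) h = iteratedFDeriv ℝ r f x h) :
    ∃ g : ℝ → F, ContDiff ℝ s g ∧
      ∀ x, iteratedFDeriv ℝ r (g ∘ ℓ) x h = iteratedFDeriv ℝ r f x h := by
  obtain ⟨e, he⟩ := hsurj 1
  obtain ⟨m, rfl⟩ := le_iff_exists_add.mp hrs
  have hψ : ContDiff ℝ m fun y : ℝ => (∏ j, ℓ (h j))⁻¹ • iteratedFDeriv ℝ r f (y • e) h := by
    have happly : ContDiff ℝ m fun x => iteratedFDeriv ℝ r f x h :=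
      (ContinuousMultilinearMap.apply ℝ _ F h).contDiff.comp
        (hf.iteratedFDeriv_right (m := m) (by push_cast; rw [add_comm]))
    fun_prop
  obtain ⟨g, hg, hgψ⟩ := exists_contDiff_iteratedDeriv_eq r hψ
  replace hg : ContDiff ℝ ((r + m : ℕ∞) : WithTop ℕ∞) g := by rw [add_comm]; exact_mod_cast hg
  refine ⟨g, hg, fun x => ?_⟩
  have hproj : iteratedFDeriv ℝ r f (ℓ x • e) h = iteratedFDeriv ℝ r f x h := by
    simpa using hinv x (ℓ x • e - x) (by simp [he])
  rw [iteratedFDeriv_comp_apply ℓ (hg.of_le (by exact_mod_cast hrs)), hgψ]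
  simp only [smul_inv_smul₀ (Finset.prod_ne_zero_iff.mpr fun j _ => hℓ j), hproj]

theorem exists_contDiff_sub_mem_lineDiffKer {r : ℕ} {h : Fin r → E} {ℓ : E →L[ℝ] ℝ}
    (hsurj : Function.Surjective ℓ) (hℓ : ∀ m, ℓ (h m) ≠ 0) {s : ℕ∞} (hrs : r ≤ s) {f : E → F}
    (hf : ContDiff ℝ s f) {φ : ℝ → F} (hφ : f - φ ∘ ℓ ∈ lineDiffKer ℝ h) :
    ∃ g : ℝ → F, ContDiff ℝ s g ∧ ∀ c : Fin r → ℝ, φ - g ∈ lineDiffKer ℝ c := by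
  have hf' : ContDiff ℝ r f := hf.of_le (by exact_mod_cast hrs)
  obtain ⟨g, hg, hgf⟩ := exists_contDiff_iteratedFDeriv_comp_eq hsurj hℓ hrs hf
    fun x v hv => iteratedFDeriv_apply_add_of_sub_mem_lineDiffKer ℓ hf' hφ x hv
  have hgℓ : ContDiff ℝ r (g ∘ ℓ) := (hg.of_le (by exact_mod_cast hrs)).comp ℓ.contDiff
  have hfg : f - g ∘ ℓ ∈ lineDiffKer ℝ h := by
    have hsub : ContDiff ℝ r (f - g ∘ ℓ) := hf'.sub hgℓ
    refine (mem_lineDiffKer_iff_iteratedFDeriv_eq_zero hsub).mpr fun x => ?_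
    rw [iteratedFDeriv_sub_apply hf'.contDiffAt hgℓ.contDiffAt]
    exact sub_eq_zero.mpr (hgf x).symm
  have hdiff : (φ - g) ∘ ℓ ∈ lineDiffKer ℝ h := by
    convert sub_mem hfg hφ using 1
    rw [sub_sub_sub_cancel_left]
    rfl
  exact ⟨g, hg, fun c => lineDiffKer_le_of_forall_ne_zero hℓ c
    ((comp_mem_lineDiffKer_iff (ℓ := ℓ.toLinearMap) hsurj).mp hdiff)⟩

theorem exists_contDiff_iteratedFDeriv_sub_sum_comp_eq_zero {ι : Type*} [Fintype ι] {r : ℕ}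
    {ℓ : ι → E →L[ℝ] ℝ}
    (hsep : ∀ i, ℓ i ≠ 0 → ∃ h : Fin r → E, (∀ m, ℓ i (h m) ≠ 0) ∧ ∀ j ≠ i, ∃ m, ℓ j (h m) = 0)
    {s : ℕ∞} (hrs : r ≤ s) {f : E → F} (hf : ContDiff ℝ s f) {φ : ι → ℝ → F}
    (hφ : f = ∑ i, φ i ∘ ℓ i) :
    ∃ g : ι → ℝ → F, (∀ i, ContDiff ℝ s (g i)) ∧ iteratedFDeriv ℝ r (f - ∑ i, g i ∘ ℓ i) = 0 := by
  have hcorrect (i : ι) : ∃ g : ℝ → F, ContDiff ℝ s g ∧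
      ∀ h : Fin r → E, (φ i - g) ∘ ℓ i ∈ lineDiffKer ℝ h := by
    by_cases hi : ℓ i = 0
    · refine ⟨fun _ => φ i 0, contDiff_const, fun h => ?_⟩
      have hconst : (φ i - fun _ => φ i 0) ∘ ℓ i = 0 := by
        funext x
        simp [hi]
      rw [hconst]
      exact zero_mem _
    have hsurj : Function.Surjective (ℓ i).toLinearMap :=
      LinearMap.surjective fun h => hi (ContinuousLinearMap.coe_injective h)
    obtain ⟨h, hi0, hj0⟩ := hsep i hi
    have hrest : f - φ i ∘ ℓ i ∈ lineDiffKer ℝ h := by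
      rw [hφ]
      exact sum_comp_sub_comp_mem_lineDiffKer (fun j => (ℓ j).toLinearMap) φ hj0
    obtain ⟨g, hg, hmem⟩ := exists_contDiff_sub_mem_lineDiffKer hsurj hi0 hrs hf hrest
    exact ⟨g, hg, fun h => (comp_mem_lineDiffKer_iff hsurj).mpr (hmem _)⟩
  choose g hg hmem using hcorrect
  refine ⟨g, hg, ?_⟩
  have hsmooth : ContDiff ℝ r (f - ∑ i, g i ∘ ℓ i) :=
    (contDiff_sub_sum_comp hf hg ℓ).of_le (by exact_mod_cast hrs)
  have hsplit : f - ∑ i, g i ∘ ℓ i = ∑ i, (φ i - g i) ∘ ℓ i := by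
    rw [hφ, ← Finset.sum_sub_distrib]
    rfl
  ext x h
  refine (mem_lineDiffKer_iff_iteratedFDeriv_eq_zero hsmooth).mp ?_ x
  rw [hsplit]
  exact sum_mem fun i _ => hmem i h

end Smooth

section Polynomial

theorem exists_mvPolynomial_isHomogeneous_eval_eq {R σ : Type*} [CommRing R] [Finite σ] {m : ℕ}
    (M : MultilinearMap R (fun _ : Fin m => σ → R) R) :
    ∃ P : MvPolynomial σ R, P.IsHomogeneous m ∧ ∀ x, MvPolynomial.eval x P = M fun _ => x := by
  classical
  have := Fintype.ofFinite σ
  refine ⟨∑ d : Fin m → σ, MvPolynomial.C (M fun j => Pi.single (d j) 1) *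
    ∏ j, MvPolynomial.X (d j), ?_, fun x => ?_⟩
  · refine MvPolynomial.IsHomogeneous.sum _ _ _ fun d _ => ?_
    have hprod : (∏ j, MvPolynomial.X (d j) : MvPolynomial σ R).IsHomogeneous m := by
      simpa using MvPolynomial.IsHomogeneous.prod Finset.univ _ (fun _ => 1) fun j _ =>
        MvPolynomial.isHomogeneous_X R (d j)
    exact hprod.C_mul _
  · conv_rhs => rw [pi_eq_sum_univ' x]
    simp [M.map_sum, M.map_smul_univ, mul_comm]

theorem exists_mvPolynomial_of_iteratedFDeriv_eq_zero {σ : Type*} [Fintype σ] {r : ℕ}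
    {w : (σ → ℝ) → ℝ} (hw : ContDiff ℝ (r + 1) w) (hzero : iteratedFDeriv ℝ (r + 1) w = 0) :
    ∃ P : MvPolynomial σ ℝ, P.totalDegree ≤ r ∧ ∀ x, MvPolynomial.eval x P = w x := by
  choose P hhom hP using fun m =>
    exists_mvPolynomial_isHomogeneous_eval_eq (iteratedFDeriv ℝ m w 0).toMultilinearMap
  refine ⟨∑ m ∈ Finset.range (r + 1), (m.factorial : ℝ)⁻¹ • P m, ?_, fun x => ?_⟩
  · refine MvPolynomial.totalDegree_finsetSum_le fun m hm => ?_
    exact (MvPolynomial.totalDegree_smul_le _ _).trans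
      ((hhom m).totalDegree_le.trans (Finset.mem_range_succ_iff.mp hm))
  · have htaylor := map_add_eq_sum_add_integral_iteratedFDeriv (x := 0) (y := x)
      fun t _ => hw.contDiffAt
    simpa [hzero, hP, MvPolynomial.smul_eval] using htaylor.symm

end Polynomial

section Separation

variable {𝕜 V ι : Type*} [Field 𝕜] [AddCommGroup V] [Module 𝕜 V]

theorem exists_dual_apply_ne_zero_of_notMem_span {S : Set (Module.Dual 𝕜 V)} (hS : S.Finite)
    {K : Module.Dual 𝕜 V} (hK : K ∉ Submodule.span 𝕜 S) : ∃ v, K v ≠ 0 ∧ ∀ L ∈ S, L v = 0 := by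
  have := hS.to_subtype
  by_contra! hno
  refine hK ?_
  rw [← Subtype.range_coe (s := S)]
  refine mem_span_of_iInf_ker_le_ker fun v hv => ?_
  by_contra hKv
  obtain ⟨L, hLS, hLv⟩ := hno v hKv
  exact hLv ((Submodule.mem_iInf _).mp hv ⟨L, hLS⟩)

theorem exists_linearIndepOn_mem_card_le [Finite ι] {ℓ : ι → V} {T : Finset ι}
    (hT : LinearIndepOn 𝕜 ℓ T) {i : ι} (hi : ℓ i ≠ 0) :
    ∃ B : Finset ι, i ∈ B ∧ T.card ≤ B.card ∧ LinearIndepOn 𝕜 ℓ B := by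
  classical
  obtain ⟨B, -, hiB, hspan, hB⟩ := exists_linearIndepOn_extension
    ((linearIndepOn_singleton_iff 𝕜).mpr hi) (Set.subset_univ {i})
  lift B to Finset ι using B.toFinite
  have hrange : Set.range (fun j : T => ℓ j) ≤ Submodule.span 𝕜 (B.image ℓ : Set V) := by
    rintro _ ⟨j, rfl⟩
    exact Finset.coe_image (f := ℓ) ▸ hspan ⟨j, trivial, rfl⟩
  have hcard : T.card ≤ (B.image ℓ).card := by
    simpa using linearIndependent_le_span' _ hT (B.image ℓ : Set V) hrange
  exact ⟨B, hiB rfl, hcard.trans Finset.card_image_le, hB⟩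

theorem exists_dual_apply_ne_zero_of_linearIndepOn_insert {ℓ : ι → Module.Dual 𝕜 V} {S : Set ι}
    (hS : S.Finite) {i : ι} (hi : i ∉ S) (hℓ : LinearIndepOn 𝕜 ℓ (insert i S)) :
    ∃ v, ℓ i v ≠ 0 ∧ ∀ j ∈ S, ℓ j v = 0 := by
  have hspan := ((linearIndepOn_insert hi).mp hℓ).2
  simpa using exists_dual_apply_ne_zero_of_notMem_span (hS.image ℓ) hspan

theorem exists_surjective_fin {α : Type*} [Fintype α] [Nonempty α] {r : ℕ}
    (h : Fintype.card α ≤ r) : ∃ e : Fin r → α, Function.Surjective e := by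
  obtain ⟨e⟩ := Function.Embedding.nonempty_of_card_le (α := α) (β := Fin r) (by simpa using h)
  exact ⟨_, Function.invFun_surjective e.injective⟩

theorem exists_separating_vectors [Fintype ι] {ℓ : ι → Module.Dual 𝕜 V}
    (hpair : Pairwise fun i j => LinearIndepOn 𝕜 ℓ {i, j}) {T : Finset ι}
    (hT : LinearIndepOn 𝕜 ℓ T) {i : ι} (hi : ℓ i ≠ 0) :
    ∃ h : Fin (Fintype.card ι - T.card + 1) → V,
      (∀ m, ℓ i (h m) ≠ 0) ∧ ∀ j ≠ i, ∃ m, ℓ j (h m) = 0 := by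
  classical
  obtain ⟨B, hiB, hTB, hB⟩ := exists_linearIndepOn_mem_card_le hT hi
  obtain ⟨v, hiv, hBv⟩ : ∃ v, ℓ i v ≠ 0 ∧ ∀ j ∈ B.erase i, ℓ j v = 0 :=
    exists_dual_apply_ne_zero_of_linearIndepOn_insert (B.erase i).finite_toSet
      (Finset.notMem_erase i B) (by rwa [← Finset.coe_insert, Finset.insert_erase hiB])
  have hout (j : {j // j ∉ B}) : ∃ u, ℓ i u ≠ 0 ∧ ℓ j u = 0 := by
    have hij : i ≠ j := fun h => j.2 (h ▸ hiB)
    simpa using exists_dual_apply_ne_zero_of_linearIndepOn_insert (Set.finite_singleton j.1) hij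
      (hpair hij)
  choose u hiu hju using hout
  have hcard : Fintype.card (Option {j // j ∉ B}) ≤ Fintype.card ι - T.card + 1 := by
    simp only [Fintype.card_option, Fintype.card_subtype_compl, Fintype.card_coe]
    omega
  obtain ⟨e, he⟩ := exists_surjective_fin hcard
  refine ⟨fun m => (e m).elim v u, fun m => ?_, fun j hji => ?_⟩
  · rcases hm : e m with _ | j
    · simpa [hm] using hiv
    · simpa [hm] using hiu j
  · by_cases hjB : j ∈ B
    · obtain ⟨m, hm⟩ := he none
      exact ⟨m, by simpa [hm] using hBv j (Finset.mem_erase.mpr ⟨hji, hjB⟩)⟩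
    · obtain ⟨m, hm⟩ := he (some ⟨j, hjB⟩)
      exact ⟨m, by simpa [hm] using hju ⟨j, hjB⟩⟩

end Separation

theorem stmt14_general {σ ι : Type*} [Fintype σ] [Fintype ι] {a : ι → σ → ℝ}
    (hpair : Pairwise fun i j => LinearIndependent ℝ ![a i, a j]) {T : Finset ι}
    (hT : LinearIndepOn ℝ a T) {s : ℕ∞} (hs : ((Fintype.card ι - T.card + 1 : ℕ) : ℕ∞) ≤ s)
    {f : (σ → ℝ) → ℝ} (hf : ContDiff ℝ s f) {φ : ι → ℝ → ℝ}
    (hφ : ∀ x, f x = ∑ i, φ i (∑ t, a i t * x t)) :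
    ∃ (g : ι → ℝ → ℝ) (P : MvPolynomial σ ℝ),
      (∀ i, ContDiff ℝ s (g i)) ∧ P.totalDegree ≤ Fintype.card ι - T.card ∧
      ∀ x, f x = (∑ i, g i (∑ t, a i t * x t)) + MvPolynomial.eval x P := by
  classical
  let D := dotProductEquiv ℝ σ
  let ℓ (i : ι) : (σ → ℝ) →L[ℝ] ℝ := (D (a i)).toContinuousLinearMap
  have hDpair : Pairwise fun i j => LinearIndepOn ℝ (D ∘ a) {i, j} := fun i j hij =>
    ((LinearIndepOn.pair_iff a hij).mpr (LinearIndependent.pair_iff.mp (hpair hij))).map_injOn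
      D.toLinearMap D.injective.injOn
  have hDT : LinearIndepOn ℝ (D ∘ a) T := hT.map_injOn D.toLinearMap D.injective.injOn
  have hsum : f = ∑ i, φ i ∘ ℓ i := by
    funext x
    simp [hφ, ℓ, D, dotProduct]
  obtain ⟨g, hg, hzero⟩ := exists_contDiff_iteratedFDeriv_sub_sum_comp_eq_zero (ℓ := ℓ)
    (fun i hi => exists_separating_vectors hDpair hDT
      (mt LinearMap.toContinuousLinearMap.map_eq_zero_iff.mpr hi)) hs hf hsum
  obtain ⟨P, hdeg, hP⟩ := exists_mvPolynomial_of_iteratedFDeriv_eq_zero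
    ((contDiff_sub_sum_comp hf hg ℓ).of_le (WithTop.coe_le_coe.mpr hs)) hzero
  refine ⟨g, P, hg, hdeg, fun x => ?_⟩
  simp [hP, ℓ, D, dotProduct]

/-- If `f ∈ Cˢ(ℝⁿ)`, `s ≥ k - p + 1`, is a sum of arbitrarily behaved ridge
functions with pairwise linearly independent directions `a¹,...,aᵏ`, where `p`
is the maximal number of linearly independent vectors among them, then it is a
sum of `Cˢ` ridge functions with the same directions plus a polynomial of
total degree at most `k - p + 1`. -/
theorem stmt14 {n k : ℕ} (s p : ℕ) (a : Fin k → Fin n → ℝ)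
    (hpair : ∀ i j : Fin k, i ≠ j → LinearIndependent ℝ ![a i, a j])
    (hp1 : ∃ T : Finset (Fin k), T.card = p ∧
      LinearIndependent ℝ (fun i : {x : Fin k // x ∈ T} => a i.1))
    (hp2 : ∀ T : Finset (Fin k),
      LinearIndependent ℝ (fun i : {x : Fin k // x ∈ T} => a i.1) → T.card ≤ p)
    (hs : k - p + 1 ≤ s)
    (f : (Fin n → ℝ) → ℝ) (hf : ContDiff ℝ (s : ℕ∞) f)
    (F : Fin k → ℝ → ℝ)
    (hrepr : ∀ x : Fin n → ℝ, f x = ∑ i, F i (∑ t, a i t * x t)) :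
    ∃ (g : Fin k → ℝ → ℝ) (P : MvPolynomial (Fin n) ℝ),
      (∀ i, ContDiff ℝ (s : ℕ∞) (g i)) ∧ P.totalDegree ≤ k - p + 1 ∧
      ∀ x : Fin n → ℝ, f x = (∑ i, g i (∑ t, a i t * x t)) + MvPolynomial.eval x P := by
  obtain ⟨T, rfl, hT⟩ := hp1
  obtain ⟨g, P, hg, hdeg, hP⟩ := stmt14_general (fun i j => hpair i j) hT
    (by rw [Fintype.card_fin]; exact_mod_cast hs) hf hrepr
  exact ⟨g, P, hg, by simpa using Nat.le_succ_of_le hdeg, hP⟩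
end
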